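/- arXiv:1111.1428 — 2 statements merged into one kernel-verified Lean document; each statement's English description precedes it below -/
import Mathlib

section
/- Fix integers m ≥ 2, s ≥ 4 and d ≥ 2s+2. For every integer r with d−s+3 ≤ r ≤ d+s−2 and r+s ≡ d+1 (mod 2), one has σ_{s,r}(X_{m,d}) = ∅. -/
open scoped LinearAlgebra.Projectivization

noncomputable section

/-- The polynomial ring in `m+1` variables over `K`: homogeneous coordinate ring of `ℙ^m`. -/
abbrev PR (K : Type) [Field K] (m : ℕ) : Type := MvPolynomial (Fin (m+1)) K

/-- The space of degree-`d` forms in `m+1` variables. -/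
abbrev Hd (K : Type) [Field K] (m d : ℕ) : Submodule K (PR K m) :=
  MvPolynomial.homogeneousSubmodule (Fin (m+1)) K d

/-- Projective `m`-space over `K`. -/
abbrev Pm (K : Type) [Field K] (m : ℕ) := ℙ K (Fin (m+1) → K)

/-- The target projective space `ℙ^n`, `n = C(m+d,m) - 1`, of the degree-`d` Veronese
embedding, realized as the projectivization of the dual of the space of degree-`d` forms
(the space of degree-`d` symmetric tensors). -/
abbrev PN (K : Type) [Field K] (m d : ℕ) := ℙ K (Module.Dual K (Hd K m d))

variable {K : Type} [Field K] {m : ℕ}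

/-- Hilbert function of `R/I` in degree `t`. -/
def hilbQ (I : Ideal (PR K m)) (t : ℕ) : ℕ :=
  Module.finrank K ((Hd K m t).map (Ideal.Quotient.mkₐ K I).toLinearMap)

/-- The degree (length) of the projective scheme defined by `I`: the eventual value of the
Hilbert function of `R/I`. -/
def idealDeg (I : Ideal (PR K m)) : ℕ := Filter.limsup (fun t => hilbQ I t) Filter.atTop

/-- `h^1(𝓘_Z(d))` for the zero-dimensional scheme `Z` with (saturated) ideal `I`:
it equals `deg Z - dim (R/I)_d`. -/
def h1I (I : Ideal (PR K m)) (d : ℕ) : ℕ := idealDeg I - hilbQ I d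

/-- An ideal is homogeneous. -/
def IsHomogI (I : Ideal (PR K m)) : Prop :=
  ∀ f ∈ I, ∀ n : ℕ, MvPolynomial.homogeneousComponent n f ∈ I

/-- An ideal is saturated with respect to the irrelevant maximal ideal. -/
def IsSatI (I : Ideal (PR K m)) : Prop :=
  ∀ f : PR K m, (∀ i, MvPolynomial.X i * f ∈ I) → f ∈ I

/-- A closed subscheme of `ℙ^m`, given by its saturated homogeneous ideal. -/
structure PSub (K : Type) [Field K] (m : ℕ) where
  I : Ideal (PR K m)
  homog : IsHomogI I
  sat : IsSatI I

/-- A (closed sub)scheme is zero-dimensional iff the Hilbert function of `R/I` is bounded. -/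
def IsZeroDimI (I : Ideal (PR K m)) : Prop := ∃ C, ∀ t, hilbQ I t ≤ C

/-- A polynomial vanishes at a projective point (every homogeneous component vanishes
at a representative). -/
def vanishesAt (f : PR K m) (a : Pm K m) : Prop :=
  ∀ n : ℕ, MvPolynomial.eval a.rep (MvPolynomial.homogeneousComponent n f) = 0

/-- Zero locus of an ideal in `ℙ^m`. -/
def pzeroLocus (I : Ideal (PR K m)) : Set (Pm K m) := {a | ∀ f ∈ I, vanishesAt f a}

/-- The (saturated) homogeneous ideal of a set of points of `ℙ^m`. -/
def idealOfSet (S : Set (Pm K m)) : Ideal (PR K m) :=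
  Ideal.span {f : PR K m | (∃ n, f.IsHomogeneous n) ∧ ∀ a ∈ S, MvPolynomial.eval a.rep f = 0}

/-- Saturation of a homogeneous ideal: the smallest saturated homogeneous ideal containing it. -/
def satIdeal (J : Ideal (PR K m)) : Ideal (PR K m) := sInf {J' | J ≤ J' ∧ IsHomogI J' ∧ IsSatI J'}

/-- The scheme defined by the (saturated) ideal `I` is reduced. -/
def IsReducedI (I : Ideal (PR K m)) : Prop := I = idealOfSet (pzeroLocus I)

/-- Connected component of a zero-dimensional scheme at a point `a`: the largest subscheme
supported at `a`, i.e. the `a`-primary component. -/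
def componentAt (I : Ideal (PR K m)) (a : Pm K m) : Ideal (PR K m) :=
  sInf {J | I ≤ J ∧ IsHomogI J ∧ IsSatI J ∧ pzeroLocus J ⊆ {a}}

/-- Residual scheme of `Z` with respect to the hypersurface `f = 0`: the colon ideal `(I_Z : f)`. -/
def resIdeal (I : Ideal (PR K m)) (f : PR K m) : Ideal (PR K m) :=
  Submodule.colon I (Ideal.span {f})

/-- Degree of the scheme-theoretic intersection of the subschemes defined by `I` and `J`. -/
def interDeg (I J : Ideal (PR K m)) : ℕ := idealDeg (I ⊔ J)

/-- The degree-`d` Veronese image of a vector `v`: the evaluation-at-`v` functional on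
degree-`d` forms. -/
def nu (d : ℕ) (v : Fin (m+1) → K) : Module.Dual K (Hd K m d) :=
  (MvPolynomial.aeval v).toLinearMap ∘ₗ (Hd K m d).subtype

/-- The linear span of the Veronese image `ν_d(S)` of a set `S` of points of `ℙ^m`. -/
def dualSpan (d : ℕ) (S : Set (Pm K m)) : Submodule K (Module.Dual K (Hd K m d)) :=
  Submodule.span K ((fun a => nu d a.rep) '' S)

/-- The linear span `⟨ν_d(Z)⟩` of the Veronese image of the subscheme with ideal `I`:
the annihilator of the degree-`d` part of `I`. -/
def schemeSpanSub (I : Ideal (PR K m)) (d : ℕ) : Submodule K (Module.Dual K (Hd K m d)) where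
  carrier := {φ | ∀ f : Hd K m d, (f : PR K m) ∈ I → φ f = 0}
  add_mem' := by
    intro a b ha hb f hf
    simp [LinearMap.add_apply, ha f hf, hb f hf]
  zero_mem' := by intro f hf; simp
  smul_mem' := by
    intro c a ha f hf
    simp [LinearMap.smul_apply, ha f hf]

/-- `P ∈ ⟨ν_d(Z)⟩`, for `Z` the subscheme with ideal `I`. -/
def inSpanI (I : Ideal (PR K m)) (d : ℕ) (P : PN K m d) : Prop := P.rep ∈ schemeSpanSub I d

/-- `P ∈ ⟨ν_d(S)⟩` for a set `S` of points of `ℙ^m`. -/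
def inSpanSet (d : ℕ) (S : Set (Pm K m)) (P : PN K m d) : Prop := P.rep ∈ dualSpan d S

/-- `L` is a linear subspace of `ℙ^m`. -/
def IsLinearSub (L : Set (Pm K m)) : Prop :=
  ∃ W : Submodule K (Fin (m+1) → K), L = {a | a.submodule ≤ W}

/-- `L` is a line of `ℙ^m`. -/
def IsLine (L : Set (Pm K m)) : Prop :=
  ∃ W : Submodule K (Fin (m+1) → K), Module.finrank K W = 2 ∧ L = {a | a.submodule ≤ W}

/-- `L` is a plane of `ℙ^m`. -/
def IsPlane (L : Set (Pm K m)) : Prop :=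
  ∃ W : Submodule K (Fin (m+1) → K), Module.finrank K W = 3 ∧ L = {a | a.submodule ≤ W}

/-- `J` is the (saturated homogeneous) ideal of a conic of `ℙ^m`: a degree-2 curve contained
in a plane (possibly reducible). -/
def IsConic (J : Ideal (PR K m)) : Prop :=
  ∃ (W : Submodule K (Fin (m+1) → K)) (q : PR K m),
    Module.finrank K W = 3 ∧ q.IsHomogeneous 2 ∧
    q ∉ idealOfSet {a : Pm K m | a.submodule ≤ W} ∧
    J = satIdeal (idealOfSet {a : Pm K m | a.submodule ≤ W} ⊔ Ideal.span {q})

/-- The algebra of polynomial functions on a `K`-vector space. -/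
def polyFunctions (K V : Type) [Field K] [AddCommGroup V] [Module K V] : Subalgebra K (V → K) :=
  Algebra.adjoin K {g : V → K | ∃ φ : V →ₗ[K] K, g = ⇑φ}

/-- Zariski closure of a subset of a projective space. -/
def zClosure {V : Type} [AddCommGroup V] [Module K V] (T : Set (ℙ K V)) : Set (ℙ K V) :=
  {P | ∀ F ∈ polyFunctions K V, (∀ Q ∈ T, ∀ c : K, F (c • Q.rep) = 0) →
    ∀ c : K, F (c • P.rep) = 0}

/-- The Veronese variety `X_{m,d} = ν_d(ℙ^m)` as a subset of `PN K m d`. -/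
def XSet (K : Type) [Field K] (m d : ℕ) : Set (PN K m d) :=
  {Q | ∃ a : Pm K m, Q.submodule = Submodule.span K {nu d a.rep}}

/-- The image `ν_d(S)` of a set of points of `ℙ^m`, as a subset of `PN K m d`. -/
def nuSet (d : ℕ) (S : Set (Pm K m)) : Set (PN K m d) :=
  {Q | ∃ a ∈ S, Q.submodule = Submodule.span K {nu d a.rep}}

/-- The rank of a point `P` of `PN` with respect to a subset `Y ⊆ PN`. -/
def rankWrt {m d : ℕ} (Y : Set (PN K m d)) (P : PN K m d) : ℕ :=
  sInf {r | ∃ S : Finset (PN K m d), ↑S ⊆ Y ∧ S.card = r ∧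
    P.rep ∈ Submodule.span K (Projectivization.rep '' (S : Set (PN K m d)))}

/-- The `s`-th secant variety of `Y ⊆ PN`: the Zariski closure of the union of the spans
of `s` points of `Y`. -/
def secantWrt {m d : ℕ} (Y : Set (PN K m d)) (s : ℕ) : Set (PN K m d) :=
  zClosure {Q | ∃ S : Finset (PN K m d), ↑S ⊆ Y ∧ S.card ≤ s ∧
    Q.rep ∈ Submodule.span K (Projectivization.rep '' (S : Set (PN K m d)))}

/-- The border rank of `P` with respect to `Y ⊆ PN`. -/
def brankWrt {m d : ℕ} (Y : Set (PN K m d)) (P : PN K m d) : ℕ :=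
  sInf {s | 0 < s ∧ P ∈ secantWrt Y s}

/-- Symmetric rank. -/
def srank {m : ℕ} (d : ℕ) (P : PN K m d) : ℕ := rankWrt (XSet K m d) P

/-- Border rank. -/
def brank {m : ℕ} (d : ℕ) (P : PN K m d) : ℕ := brankWrt (XSet K m d) P

/-- Cactus rank: minimal degree of a zero-dimensional closed subscheme `E ⊂ ℙ^m` with
`P ∈ ⟨ν_d(E)⟩`. -/
def crank {m : ℕ} (d : ℕ) (P : PN K m d) : ℕ :=
  sInf {c | ∃ Z : PSub K m, IsZeroDimI Z.I ∧ idealDeg Z.I = c ∧ inSpanI Z.I d P}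

/-- `σ_{s,r}(X_{m,d})`. -/
def sigmaSet (K : Type) [Field K] (m d s r : ℕ) : Set (PN K m d) :=
  {P | brank d P = s ∧ srank d P = r}

/-- A property `Φ` holds for a general `k`-tuple of points of the linear subspace of `ℙ^m`
determined by `W`. -/
def GenerallyOn (W : Submodule K (Fin (m+1) → K)) (k : ℕ)
    (Φ : (Fin k → Pm K m) → Prop) : Prop :=
  ∃ w : Fin 3 → W, Submodule.span K (Set.range fun j => (w j : Fin (m+1) → K)) = W ∧
    ∃ F : MvPolynomial (Fin k × Fin 3) K, F ≠ 0 ∧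
      ∀ c : Fin k → Fin 3 → K,
        MvPolynomial.eval (fun p => c p.1 p.2) F ≠ 0 →
        ∀ e : Fin k → Pm K m,
          (∀ i, (e i).submodule = Submodule.span K {∑ j, c i j • (w j : Fin (m+1) → K)}) → Φ e

end

section Univ
open Polynomial

theorem xmod_nodal {K ι : Type} [Field K] [DecidableEq ι] (s : Finset ι) (v : ι → K)
    (hv : Set.InjOn v s) (ψ : K[X] →ₗ[K] K) (f : K[X]) :
    ψ (f %ₘ Lagrange.nodal s v) = ∑ i ∈ s, f.eval (v i) * ψ (Lagrange.basis s v i) := by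
  have h : f %ₘ Lagrange.nodal s v = Lagrange.interpolate s v (fun i => f.eval (v i)) := by
    apply Lagrange.eq_interpolate_of_eval_eq _ hv
    · rw [← Lagrange.degree_nodal (v := v)]
      exact degree_modByMonic_lt _ (Lagrange.nodal_monic)
    · intro i hi
      have := congrArg (eval (v i)) (modByMonic_add_div f (Lagrange.nodal s v))
      rw [eval_add, eval_mul, Lagrange.eval_nodal_at_node hi] at this
      simpa using this
  rw [h, Lagrange.interpolate_apply, map_sum]
  refine Finset.sum_congr rfl fun i _ => ?_
  rw [← smul_eq_C_mul, map_smul, smul_eq_mul]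

theorem xmod_eq {K : Type} [Field K] (φ : K[X] →ₗ[K] K) (d : ℕ) (g : K[X]) (hg : g.Monic)
    (h : ∀ f : K[X], f.natDegree + g.natDegree ≤ d → φ (g * f) = 0) (f : K[X])
    (hf : f.natDegree ≤ d) : φ (f %ₘ g) = φ f := by
  have h1 := modByMonic_add_div f g
  conv_rhs => rw [← h1]
  rw [map_add]
  by_cases hlt : f.natDegree < g.natDegree
  · have : f /ₘ g = 0 := by
      rw [divByMonic_eq_zero_iff hg]
      exact degree_lt_degree hlt
    rw [this]; simp
  · rw [h, add_zero]
    rw [natDegree_divByMonic f hg]; omega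

theorem xsylv {K : Type} [Field K] (φ : K[X] →ₗ[K] K) (d : ℕ) (g0 : K[X]) (hg : g0.Monic)
    (h : ∀ f : K[X], f.natDegree + g0.natDegree ≤ d → φ (g0 * f) = 0) :
    ∃ (ψ : K[X] →ₗ[K] K) (g : K[X]), g.Monic ∧ g.natDegree ≤ g0.natDegree ∧
      (∀ f : K[X], f.natDegree ≤ d → ψ f = φ f) ∧
      ∀ f : K[X], (∀ h, ψ (f * h) = 0) ↔ g ∣ f := by
  classical
  let ψ : K[X] →ₗ[K] K := φ ∘ₗ (modByMonicHom g0)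
  have hψ : ∀ f, ψ f = φ (f %ₘ g0) := fun f => rfl
  let J : Ideal K[X] :=
    { carrier := {f | ∀ h, ψ (f * h) = 0}
      add_mem' := by
        intro a b ha hb h
        rw [add_mul, map_add, ha h, hb h, add_zero]
      zero_mem' := by intro h; simp
      smul_mem' := by
        intro c x hx h
        have := hx (c * h)
        rw [smul_eq_mul]
        rwa [show c * x * h = x * (c * h) by ring] }
  have hJ : ∀ f, f ∈ J ↔ ∀ h, ψ (f * h) = 0 := fun f => Iff.rfl
  have hg0 : g0 ∈ J := by
    rw [hJ]; intro h
    rw [hψ, (modByMonic_eq_zero_iff_dvd hg).2 (dvd_mul_right _ _), map_zero]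
  obtain ⟨g1, hg1⟩ := (IsPrincipalIdealRing.principal J).principal
  have hmem : ∀ f, f ∈ J ↔ g1 ∣ f := by
    intro f; rw [hg1]; exact Ideal.mem_span_singleton
  have hg1d : g1 ∣ g0 := (hmem _).1 hg0
  have hg1n : g1 ≠ 0 := by
    rintro rfl
    exact hg.ne_zero (zero_dvd_iff.1 hg1d)
  refine ⟨ψ, normalize g1, monic_normalize hg1n, ?_, ?_, ?_⟩
  · exact natDegree_le_of_dvd (normalize_dvd_iff.2 hg1d) hg.ne_zero
  · intro f hf
    rw [hψ, xmod_eq φ d g0 hg h f hf]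
  · intro f
    rw [← hJ, hmem, normalize_dvd_iff]

theorem xhankel {K : Type} [Field K] (ψ : K[X] →ₗ[K] K) (g : K[X]) (hg : g.Monic)
    (h : ∀ f : K[X], (∀ h, ψ (f * h) = 0) ↔ g ∣ f) :
    (Matrix.of fun i j : Fin g.natDegree => ψ (X ^ ((i : ℕ) + (j : ℕ)))).det ≠ 0 := by
  classical
  intro hdet
  obtain ⟨c, hc, hc0⟩ := Matrix.exists_vecMul_eq_zero_iff.2 hdet
  let f : K[X] := ∑ i : Fin g.natDegree, C (c i) * X ^ (i : ℕ)
  have hfdeg : f.degree < g.natDegree := by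
    apply degree_sum_fin_lt
  have hfj : ∀ j : ℕ, j < g.natDegree → ψ (f * X ^ j) = 0 := by
    intro j hj
    have := congrFun hc0 ⟨j, hj⟩
    simp only [Matrix.vecMul, dotProduct, Matrix.of_apply, Pi.zero_apply] at this
    rw [← this]
    simp only [f, Finset.sum_mul, map_sum]
    refine Finset.sum_congr rfl fun i _ => ?_
    rw [mul_assoc, ← pow_add, ← smul_eq_C_mul, map_smul, smul_eq_mul]
  have hall : ∀ h', ψ (f * h') = 0 := by
    intro h'
    have h1 : f * h' = f * (h' %ₘ g) + g * (f * (h' /ₘ g)) := by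
      conv_lhs => rw [← modByMonic_add_div h' g]
      ring
    rw [h1, map_add, (h g).2 dvd_rfl, add_zero]
    rcases Nat.eq_zero_or_pos g.natDegree with h0 | h0
    · have : g = 1 := by
        exact (Monic.natDegree_eq_zero hg).1 h0
      rw [this]; simp
    rw [as_sum_range' (h' %ₘ g) g.natDegree (by
      exact natDegree_modByMonic_lt _ hg (by rintro rfl; simp at h0)), Finset.mul_sum, map_sum]
    apply Finset.sum_eq_zero
    intro i hi
    rw [← C_mul_X_pow_eq_monomial, show ∀ a : K[X], f * (a * X ^ i) = a * (f * X^i) by intro a; ring,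
      ← smul_eq_C_mul, map_smul, hfj i (Finset.mem_range.1 hi), smul_zero]
  have hdvd := (h f).1 hall
  have hf0 : f = 0 := by
    apply eq_zero_of_dvd_of_degree_lt hdvd
    rw [degree_eq_natDegree hg.ne_zero]; exact hfdeg
  apply hc
  funext i
  have := congrArg (fun p => coeff p (i : ℕ)) hf0
  simp only [f, finsetSum_coeff, coeff_C_mul, coeff_X_pow, coeff_zero] at this
  rw [Finset.sum_eq_single i] at this
  · simpa using this
  · intro j _ hji
    rw [if_neg, mul_zero]
    intro hh; exact hji (Fin.ext hh.symm)
  · simp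

theorem xbertini {K : Type} [Field K] [CharZero K] [IsAlgClosed K] (v u : K[X]) (hv : v.Monic)
    (hN : 0 < v.natDegree) (huv : IsCoprime v u) (hu : u.degree < v.degree) :
    ∃ (Z : Finset K) (c : K), Z.card = v.natDegree ∧ Lagrange.nodal Z id = v + C c * u := by
  classical
  let W := derivative v * u - v * derivative u
  have hW : W ≠ 0 := by
    intro hW
    have h1 : derivative v * u = v * derivative u := sub_eq_zero.1 hW
    have h2 : v ∣ derivative v := huv.dvd_of_dvd_mul_right ⟨_, h1⟩
    have h3 : derivative v = 0 := eq_zero_of_dvd_of_degree_lt h2 (degree_derivative_lt hv.ne_zero)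
    have := natDegree_eq_zero_of_derivative_eq_zero h3
    omega
  obtain ⟨c, hc⟩ := Infinite.exists_notMem_finset (W.roots.toFinset.image fun z => - v.eval z / u.eval z)
  let p := v + C c * u
  have hdeg : (C c * u).degree < v.degree := lt_of_le_of_lt (by
    refine (degree_mul_le _ _).trans ?_
    calc _ ≤ 0 + u.degree := by gcongr; exact degree_C_le
      _ = _ := zero_add _) hu
  have hp : p.Monic := hv.add_of_left hdeg
  have hpd : p.natDegree = v.natDegree := by
    apply natDegree_eq_of_degree_eq
    exact degree_add_eq_left_of_degree_lt hdeg
  have hsep : p.roots.Nodup := by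
    rw [Multiset.nodup_iff_count_le_one]
    intro z
    rw [count_roots]
    by_contra hlt
    push Not at hlt
    have h1 := (one_lt_rootMultiplicity_iff_isRoot hp.ne_zero).1 hlt
    obtain ⟨h2, h3⟩ := h1
    simp only [p, IsRoot.def, derivative_add, derivative_mul, derivative_C, zero_mul, zero_add,
      eval_add, eval_mul, eval_C] at h2 h3
    have hWz : W.eval z = 0 := by
      simp only [W, eval_sub, eval_mul]
      linear_combination (eval z u) * h3 - (eval z (derivative u)) * h2
    apply hc
    rw [Finset.mem_image]
    refine ⟨z, ?_, ?_⟩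
    · rw [Multiset.mem_toFinset, mem_roots hW]; exact hWz
    · have hu0 : eval z u ≠ 0 := by
        intro hu0
        obtain ⟨a, b, hab⟩ := huv
        have := congrArg (eval z) hab
        rw [hu0, mul_zero, add_zero] at h2
        simp [hu0, h2] at this
      field_simp
      linear_combination -h2
  refine ⟨p.roots.toFinset, c, ?_, ?_⟩
  · rw [Multiset.toFinset_card_of_nodup hsep, ← hpd]
    exact (IsAlgClosed.splits p).natDegree_eq_card_roots.symm
  · rw [Lagrange.nodal_eq]
    have h := (IsAlgClosed.splits p).eq_prod_roots
    rw [hp.leadingCoeff, C_1, one_mul] at h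
    change _ = p
    conv_rhs => rw [h]
    rw [Finset.prod_eq_multiset_prod, Multiset.toFinset_val, Multiset.dedup_eq_self.2 hsep]
    simp

theorem xrank {K : Type} [Field K] [CharZero K] [IsAlgClosed K] (ψ : K[X] →ₗ[K] K) (g : K[X])
    (hg : g.Monic) (h : ∀ f : K[X], (∀ h, ψ (f * h) = 0) ↔ g ∣ f) (d N : ℕ)
    (hN : N + g.natDegree = d + 2) (hb : g.natDegree ≤ N) (hN0 : 0 < N) :
    ∃ (Z : Finset K) (c : K → K), Z.card = N ∧
      ∀ f : K[X], f.natDegree ≤ d → ψ f = ∑ z ∈ Z, f.eval z * c z := by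
  classical
  -- find u0
  obtain ⟨u0, hu0d, hu0c, hu0k⟩ : ∃ u0 : K[X], u0.degree < g.natDegree ∧ IsCoprime g u0 ∧
      ∀ f : K[X], f.natDegree + 2 ≤ g.natDegree → ψ (u0 * f) = 0 := by
    rcases Nat.eq_zero_or_pos g.natDegree with h0 | h0
    · have h1 : g = 1 := (Monic.natDegree_eq_zero hg).1 h0
      refine ⟨0, ?_, ?_, by intros; simp⟩
      · rw [degree_zero]; exact WithBot.bot_lt_coe _
      · rw [h1]; exact isCoprime_one_left
    have hH := xhankel ψ g hg h
    set H := (Matrix.of fun i j : Fin g.natDegree => ψ (X ^ ((i : ℕ) + (j : ℕ)))) with hHdef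
    let e : Fin g.natDegree → K := Pi.single ⟨g.natDegree - 1, by omega⟩ 1
    let c := Matrix.vecMul e H⁻¹
    have hce : Matrix.vecMul c H = e := by
      simp only [c, Matrix.vecMul_vecMul]
      rw [Matrix.nonsing_inv_mul _ (isUnit_iff_ne_zero.2 hH), Matrix.vecMul_one]
    let f : K[X] := ∑ i : Fin g.natDegree, C (c i) * X ^ (i : ℕ)
    have hfj : ∀ j : ℕ, j < g.natDegree → ψ (f * X ^ j) = if j = g.natDegree - 1 then 1 else 0 := by
      intro j hj
      have := congrFun hce ⟨j, hj⟩
      simp only [Matrix.vecMul, dotProduct, hHdef, Matrix.of_apply, e, Pi.single_apply, Fin.mk.injEq] at this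
      rw [← this]
      simp only [f, Finset.sum_mul, map_sum]
      refine Finset.sum_congr rfl fun i _ => ?_
      rw [mul_assoc, ← pow_add, ← smul_eq_C_mul, map_smul, smul_eq_mul]
    have hfp : ∀ p : K[X], p.natDegree < g.natDegree → ψ (f * p) = p.coeff (g.natDegree - 1) := by
      intro p hp
      conv_lhs => rw [as_sum_range' p g.natDegree hp, Finset.mul_sum, map_sum]
      rw [Finset.sum_eq_single (g.natDegree - 1)]
      · rw [← C_mul_X_pow_eq_monomial, show ∀ a b : K[X], f * (a * b) = a * (f * b) by intro a b; ring,
          ← smul_eq_C_mul, map_smul, hfj _ (by omega)]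
        simp
      · intro i hi hne
        rw [← C_mul_X_pow_eq_monomial, show ∀ a b : K[X], f * (a * b) = a * (f * b) by intro a b; ring,
          ← smul_eq_C_mul, map_smul, hfj _ (Finset.mem_range.1 hi), if_neg hne, smul_zero]
      · intro hn; simp at hn; omega
    refine ⟨f, degree_sum_fin_lt _, ?_, ?_⟩
    · -- coprime
      rw [← EuclideanDomain.gcd_isUnit_iff]
      by_contra hnu
      set q := EuclideanDomain.gcd g f with hq
      obtain ⟨g', hg'⟩ := EuclideanDomain.gcd_dvd_left g f
      obtain ⟨f', hf'⟩ := EuclideanDomain.gcd_dvd_right g f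
      rw [← hq] at hg' hf'
      have hq0 : q ≠ 0 := by intro h; rw [h, zero_mul] at hg'; exact hg.ne_zero hg'
      have hg'0 : g' ≠ 0 := by intro h; rw [h, mul_zero] at hg'; exact hg.ne_zero hg'
      have hqd : 0 < q.natDegree := by
        rw [Nat.pos_iff_ne_zero]
        intro h; apply hnu
        rw [natDegree_eq_zero] at h
        obtain ⟨x, hx⟩ := h
        rw [← hx]; rw [isUnit_C, isUnit_iff_ne_zero]
        rintro rfl; simp at hx; exact hq0 hx.symm
      have hdg : g.natDegree = q.natDegree + g'.natDegree := by
        conv_lhs => rw [hg']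
        exact natDegree_mul hq0 hg'0
      have hk : ψ (f * (g' * X ^ (q.natDegree - 1))) = 0 := by
        have := (h g).2 dvd_rfl (f' * X ^ (q.natDegree - 1))
        rw [← this]; congr 1
        conv_lhs => rw [hf']
        conv_rhs => rw [hg']
        ring
      have hnd : (g' * X ^ (q.natDegree - 1)).natDegree = g.natDegree - 1 := by
        rw [natDegree_mul_X_pow _ hg'0]; omega
      rw [hfp _ (by omega), ← hnd] at hk
      have := leadingCoeff_eq_zero.1 hk
      simp [hg'0] at this
    · intro p hp
      rw [hfp p (by omega)]
      exact coeff_eq_zero_of_natDegree_lt (by omega)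
  obtain ⟨a, ha⟩ : ∃ a : K, u0 = 0 ∨ u0.eval a ≠ 0 := by
    by_cases hz : u0 = 0
    · exact ⟨0, Or.inl hz⟩
    · obtain ⟨a, ha⟩ := Infinite.exists_notMem_finset u0.roots.toFinset
      refine ⟨a, Or.inr ?_⟩
      intro h; apply ha; rw [Multiset.mem_toFinset, mem_roots hz]; exact h
  by_cases hz : u0 = 0
  · -- g is a unit
    subst hz
    have hg1 : g = 1 := by
      have := (isCoprime_zero_right.1 hu0c)
      exact hg.eq_one_of_isUnit this
    obtain ⟨Z, hZ⟩ := Infinite.exists_subset_card_eq K N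
    refine ⟨Z, fun _ => 0, hZ, ?_⟩
    intro f _
    have := (h 1).2 (by rw [hg1]) f
    simpa using this
  have ha : u0.eval a ≠ 0 := by tauto
  let v := g * (X - C a) ^ (N - g.natDegree)
  have hvm : v.Monic := hg.mul ((monic_X_sub_C a).pow _)
  have hvd : v.natDegree = N := by
    rw [hg.natDegree_mul ((monic_X_sub_C a).pow _), (monic_X_sub_C a).natDegree_pow, natDegree_X_sub_C]
    omega
  have hcop : IsCoprime v u0 := by
    apply IsCoprime.mul_left hu0c
    apply IsCoprime.pow_left
    rw [(irreducible_X_sub_C a).coprime_iff_not_dvd, dvd_iff_isRoot]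
    exact ha
  obtain ⟨Z, c, hZ, hnod⟩ := xbertini v u0 hvm (by omega) hcop (by
    rw [degree_eq_natDegree hvm.ne_zero, hvd]
    exact lt_of_lt_of_le hu0d (by exact_mod_cast hb))
  refine ⟨Z, fun z => ψ (Lagrange.basis Z id z), by omega, ?_⟩
  intro f hf
  have := xmod_nodal Z id (Set.injOn_id _) ψ f
  simp only [id] at this
  rw [← this]
  symm
  apply xmod_eq ψ d _ (Lagrange.nodal_monic) _ f hf
  intro p hp
  change p.natDegree + (Lagrange.nodal Z id).natDegree ≤ d at hp
  change ψ (Lagrange.nodal Z id * p) = 0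
  rw [Lagrange.natDegree_nodal] at hp
  rw [hnod, add_mul, map_add]
  have h1 : ψ (v * p) = 0 := by
    have := (h g).2 dvd_rfl ((X - C a) ^ (N - g.natDegree) * p)
    rw [← this]; simp only [v]; congr 1; ring
  rw [h1, mul_assoc, ← smul_eq_C_mul, map_smul, hu0k p (by omega), smul_zero, add_zero]
end Univ

section Univ2
open Polynomial

theorem xcurve {K : Type} [Field K] [CharZero K] [IsAlgClosed K] (ψ : K[X] →ₗ[K] K) (g : K[X])
    (hg : g.Monic) (h : ∀ f : K[X], ψ (g * f) = 0) :
    ∃ (q : ℕ → K[X]) (E : Finset K), (∀ k, (q k).eval 0 = ψ (X ^ k)) ∧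
      ∀ ε, ε ∉ E → ∃ (Z c : Fin g.natDegree → K), ∀ k, (q k).eval ε = ∑ i, c i * Z i ^ k := by
  classical
  have hsp := IsAlgClosed.splits g
  obtain ⟨α, hα⟩ : ∃ α : Fin g.natDegree → K, Lagrange.nodal Finset.univ α = g := by
    obtain ⟨l, hl0⟩ := Quot.exists_rep g.roots
    have hl1 : (l : Multiset K) = g.roots := hl0
    have hl : l.length = g.natDegree := by
      rw [hsp.natDegree_eq_card_roots, ← hl1, Multiset.coe_card]
    have h := hsp.eq_prod_roots
    rw [hg.leadingCoeff, C_1, one_mul, ← hl1, Multiset.map_coe, Multiset.prod_coe] at h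
    refine ⟨fun i => l.get (i.cast hl.symm), ?_⟩
    rw [Lagrange.nodal_eq]
    refine Eq.trans ?_ h.symm
    have h2 : l.map (fun x => X - C x) = List.ofFn (fun i => X - C (l.get i)) := by
      conv_lhs => rw [← List.ofFn_get l, List.map_ofFn]
      rfl
    rw [h2, List.prod_ofFn]
    exact Fintype.prod_equiv (finCongr hl.symm) _ _ (fun i => rfl)
  let G : K[X][X] := Lagrange.nodal Finset.univ (fun i : Fin g.natDegree => C (α i) + C ((i : ℕ) : K) * X)
  have hG : G.Monic := Lagrange.nodal_monic
  have hGm : ∀ ε, G.map (evalRingHom ε) =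
      Lagrange.nodal Finset.univ (fun i : Fin g.natDegree => α i + (i : ℕ) * ε) := by
    intro ε
    simp only [G, Lagrange.nodal_eq, Polynomial.map_prod]
    simp
  let ρ : ℕ → K[X][X] := fun k => X ^ k %ₘ G
  have hρ : ∀ k ε, (ρ k).map (evalRingHom ε) =
      X ^ k %ₘ Lagrange.nodal Finset.univ (fun i : Fin g.natDegree => α i + (i : ℕ) * ε) := by
    intro k ε
    rw [map_modByMonic _ hG, hGm]; simp
  let q : ℕ → K[X] := fun k => ∑ j ∈ Finset.range ((ρ k).natDegree + 1), (ρ k).coeff j * C (ψ (X ^ j))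
  have hq : ∀ k ε, (q k).eval ε = ψ ((ρ k).map (evalRingHom ε)) := by
    intro k ε
    rw [as_sum_range' ((ρ k).map (evalRingHom ε)) ((ρ k).natDegree + 1)
      (Nat.lt_succ_of_le natDegree_map_le), map_sum]
    simp only [q, eval_finsetSum]
    refine Finset.sum_congr rfl fun j _ => ?_
    rw [← C_mul_X_pow_eq_monomial, ← smul_eq_C_mul, map_smul, coeff_map]
    simp
  let E : Finset K := (Finset.univ : Finset (Fin g.natDegree × Fin g.natDegree)).image
    fun p => (α p.1 - α p.2) / (((p.2 : ℕ) : K) - ((p.1 : ℕ) : K))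
  refine ⟨q, E, ?_, ?_⟩
  · intro k
    rw [hq, hρ]
    simp only [mul_zero, add_zero]
    rw [hα]
    apply xmod_eq ψ k g hg (fun f _ => h f)
    simp
  · intro ε hε
    let Z : Fin g.natDegree → K := fun i => α i + (i : ℕ) * ε
    have hinj : Set.InjOn Z (Finset.univ : Finset (Fin g.natDegree)) := by
      intro i _ j _ hij
      by_contra hne
      apply hε
      rw [Finset.mem_image]
      refine ⟨(i, j), Finset.mem_univ _, ?_⟩
      simp only [Z] at hij
      have : (((j : ℕ) : K) - ((i : ℕ) : K)) ≠ 0 := by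
        rw [sub_ne_zero]
        intro hh
        exact hne (Fin.ext (Nat.cast_injective hh).symm)
      rw [div_eq_iff this]
      linear_combination hij
    refine ⟨Z, fun i => ψ (Lagrange.basis Finset.univ Z i), fun k => ?_⟩
    rw [hq, hρ, xmod_nodal _ _ hinj]
    simp only [eval_pow, eval_X, Z]
    refine Finset.sum_congr rfl fun i _ => mul_comm _ _
end Univ2

section PartA
open MvPolynomial

theorem nu_apply' {K : Type} [Field K] {m d : ℕ} (v : Fin (m+1) → K) (f : Hd K m d) :
    nu d v f = eval v (f : PR K m) := by
  simp [nu, aeval_eq_eval]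

theorem heval_smul {K : Type} [Field K] {m k : ℕ} (F : PR K m) (hF : F.IsHomogeneous k) (c : K)
    (v : Fin (m+1) → K) : eval (c • v) F = c ^ k * eval v F := by
  rw [eval_eq', eval_eq', Finset.mul_sum]
  refine Finset.sum_congr rfl fun e he => ?_
  have h1 : ∑ i, e i = k := by
    have := hF (mem_support_iff.1 he)
    rw [← this, Finsupp.weight_apply, Finsupp.sum_fintype] <;> simp
  simp only [Pi.smul_apply, smul_eq_mul, mul_pow, Finset.prod_mul_distrib, Finset.prod_pow_eq_pow_sum, h1]
  ring

theorem nu_smul {K : Type} [Field K] {m d : ℕ} (c : K) (v : Fin (m+1) → K) :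
    nu d (c • v) = c ^ d • nu d v := by
  ext f
  rw [nu_apply', heval_smul _ ((mem_homogeneousSubmodule _ _).1 f.2), LinearMap.smul_apply, nu_apply',
    smul_eq_mul]

theorem nu_ne_zero {K : Type} [Field K] {m d : ℕ} (v : Fin (m+1) → K) (hv : v ≠ 0) :
    nu d v ≠ 0 := by
  obtain ⟨i, hi⟩ := Function.ne_iff.1 hv
  intro h
  have := LinearMap.congr_fun h ⟨X i ^ d, by
    rw [mem_homogeneousSubmodule]; simpa using isHomogeneous_X_pow (R := K) i d⟩
  rw [nu_apply'] at this
  simp at this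
  exact hi this.1

/-- linear form -/
noncomputable def lform {K : Type} [Field K] {m : ℕ} (φ : Module.Dual K (Fin (m+1) → K)) : PR K m :=
  ∑ i, C (φ (Pi.single i 1)) * X i

theorem lform_homog {K : Type} [Field K] {m : ℕ} (φ : Module.Dual K (Fin (m+1) → K)) :
    (lform φ).IsHomogeneous 1 := by
  apply IsHomogeneous.sum
  intro i _
  exact isHomogeneous_C_mul_X _ _

theorem lform_eval {K : Type} [Field K] {m : ℕ} (φ : Module.Dual K (Fin (m+1) → K))
    (v : Fin (m+1) → K) : eval v (lform φ) = φ v := by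
  simp only [lform, map_sum, map_mul, eval_C, eval_X]
  conv_rhs => rw [← Finset.univ_sum_single v, map_sum]
  refine Finset.sum_congr rfl fun i _ => ?_
  rw [mul_comm, ← smul_eq_mul, ← map_smul]
  congr 1
  ext j
  simp [Pi.single_apply]

/-- restriction to a parametrized line -/
noncomputable def pol {K : Type} [Field K] {m : ℕ} (w0 w1 : Fin (m+1) → K) :
    PR K m →ₐ[K] Polynomial K :=
  aeval (fun i => Polynomial.C (w0 i) + Polynomial.C (w1 i) * Polynomial.X)

theorem pol_eval {K : Type} [Field K] {m : ℕ} (w0 w1 : Fin (m+1) → K) (F : PR K m) (y : K) :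
    (pol w0 w1 F).eval y = eval (w0 + y • w1) F := by
  have : (Polynomial.evalRingHom y).comp (pol w0 w1 : PR K m →+* Polynomial K) =
      (eval (w0 + y • w1) : PR K m →+* K) := by
    apply MvPolynomial.ringHom_ext
    · intro r; simp [pol]
    · intro i; simp [pol]; ring
  exact RingHom.congr_fun this F

theorem pol_natDegree {K : Type} [Field K] {m k : ℕ} (w0 w1 : Fin (m+1) → K) (F : PR K m)
    (hF : F.IsHomogeneous k) : (pol w0 w1 F).natDegree ≤ k := by
  have h : pol w0 w1 F = ∑ e ∈ F.support, Polynomial.C (coeff e F) *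
      ∏ i, (Polynomial.C (w0 i) + Polynomial.C (w1 i) * Polynomial.X) ^ (e i) := by
    simp only [pol, aeval_def, eval₂_eq']
    rfl
  rw [h]
  apply Polynomial.natDegree_sum_le_of_forall_le
  intro e he
  have h1 : ∑ i, e i = k := by
    have := hF (mem_support_iff.1 he)
    rw [← this, Finsupp.weight_apply, Finsupp.sum_fintype] <;> simp
  refine (Polynomial.natDegree_C_mul_le _ _).trans ?_
  refine (Polynomial.natDegree_prod_le _ _).trans ?_
  rw [← h1]
  refine Finset.sum_le_sum fun i _ => ?_
  refine Polynomial.natDegree_pow_le.trans ?_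
  have : (Polynomial.C (w0 i) + Polynomial.C (w1 i) * Polynomial.X : Polynomial K).natDegree ≤ 1 := by
    compute_degree
  nlinarith

theorem pol_lform {K : Type} [Field K] {m : ℕ} (w0 w1 : Fin (m+1) → K)
    (φ : Module.Dual K (Fin (m+1) → K)) :
    pol w0 w1 (lform φ) = Polynomial.C (φ w0) + Polynomial.C (φ w1) * Polynomial.X := by
  rw [← lform_eval, ← lform_eval]
  simp only [lform, pol, map_sum, map_mul, aeval_X, eval_C, eval_X, aeval_C,
    Polynomial.algebraMap_eq]
  rw [Finset.sum_mul, ← Finset.sum_add_distrib]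
  refine Finset.sum_congr rfl fun i _ => by ring

theorem exists_lform {K : Type} [Field K] {m : ℕ} (W : Submodule K (Fin (m+1) → K))
    (p : Fin (m+1) → K) (hp : p ∉ W) : ∃ φ : Module.Dual K (Fin (m+1) → K), φ p = 1 ∧
      ∀ w ∈ W, φ w = 0 := by
  obtain ⟨φ, h1, h2⟩ := Submodule.exists_dual_map_eq_bot_of_notMem hp inferInstance
  refine ⟨(φ p)⁻¹ • φ, by simp [h1], ?_⟩
  intro w hw
  have : φ w ∈ W.map φ := Submodule.mem_map_of_mem hw
  rw [h2, Submodule.mem_bot] at this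
  simp [this]

theorem exists_S {K : Type} [Field K] {m d : ℕ} {ι : Type} (T : Finset ι) (c : ι → K)
    (u : ι → Fin (m+1) → K) (hu : ∀ i ∈ T, u i ≠ 0) :
    ∃ S : Finset (PN K m d), ↑S ⊆ XSet K m d ∧ S.card ≤ T.card ∧
      (∑ i ∈ T, c i • nu d (u i)) ∈ Submodule.span K (Projectivization.rep '' (S : Set (PN K m d))) := by
  classical
  let pt : T → PN K m d := fun i => Projectivization.mk K (nu d (u i)) (nu_ne_zero _ (hu i i.2))
  refine ⟨Finset.univ.image pt, ?_, ?_, ?_⟩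
  · intro Q hQ
    simp only [Finset.coe_image, Finset.coe_univ, Set.image_univ, Set.mem_range] at hQ
    obtain ⟨i, rfl⟩ := hQ
    refine ⟨Projectivization.mk K (u i) (hu i i.2), ?_⟩
    obtain ⟨a, ha⟩ := Projectivization.exists_smul_eq_mk_rep K (u i) (hu i i.2)
    rw [← ha, Projectivization.submodule_mk]
    have : nu d (a • u i) = (a ^ d) • nu d (u (i : ι)) := by
      have := nu_smul (d := d) (a : K) (u i)
      rw [Units.smul_def, this, Units.smul_def]; simp
    rw [this]
    exact (Submodule.span_singleton_group_smul_eq K (a ^ d) _).symm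
  · refine Finset.card_image_le.trans ?_
    simp
  · rw [← Finset.sum_coe_sort]
    apply Submodule.sum_mem
    intro i _
    apply Submodule.smul_mem
    obtain ⟨a, ha⟩ := Projectivization.exists_smul_eq_mk_rep K (nu d (u i)) (nu_ne_zero _ (hu i i.2))
    have : nu d (u i) = a⁻¹ • (pt i).rep := by
      rw [← ha, inv_smul_smul]
    rw [this]
    apply Submodule.smul_mem
    apply Submodule.subset_span
    exact ⟨pt i, by simp, rfl⟩

theorem exists_B {K : Type} [Field K] {m d : ℕ} (S : Finset (PN K m d)) (hS : ↑S ⊆ XSet K m d)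
    (y : Module.Dual K (Hd K m d))
    (hy : y ∈ Submodule.span K (Projectivization.rep '' (S : Set (PN K m d)))) :
    ∃ (B : Finset (Pm K m)) (l : Pm K m → K), B.card ≤ S.card ∧ y = ∑ a ∈ B, l a • nu d a.rep := by
  classical
  choose a ha using fun Q : S => hS Q.2
  let B : Finset (Pm K m) := Finset.univ.image a
  have hle : Submodule.span K (Projectivization.rep '' (S : Set (PN K m d))) ≤
      Submodule.span K ((fun a : Pm K m => nu d a.rep) '' (B : Set (Pm K m))) := by
    rw [Submodule.span_le]
    rintro _ ⟨Q, hQ, rfl⟩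
    have h1 : Q.rep ∈ Q.submodule := by
      rw [Projectivization.submodule_eq]; exact Submodule.mem_span_singleton_self _
    rw [ha ⟨Q, hQ⟩] at h1
    refine Submodule.span_mono ?_ h1
    rw [Set.singleton_subset_iff]
    exact ⟨a ⟨Q, hQ⟩, by simp [B], rfl⟩
  obtain ⟨l, hl⟩ := (Submodule.mem_span_image_finset_iff_exists_fun K).1 (hle hy)
  refine ⟨B, fun a => if h : a ∈ B then l ⟨a, h⟩ else 0, ?_, ?_⟩
  swap
  · rw [← hl, ← Finset.sum_coe_sort B]
    refine Finset.sum_congr rfl fun a _ => ?_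
    simp
  refine Finset.card_image_le.trans ?_
  simp

theorem srank_le' {K : Type} [Field K] {m d : ℕ} (P : PN K m d) {ι : Type} (T : Finset ι) (c : ι → K)
    (u : ι → Fin (m+1) → K) (hu : ∀ i ∈ T, u i ≠ 0) (h : P.rep = ∑ i ∈ T, c i • nu d (u i)) :
    srank d P ≤ T.card := by
  obtain ⟨S, h1, h2, h3⟩ := exists_S (d := d) T c u hu
  rw [← h] at h3
  have h4 : srank d P ≤ S.card := Nat.sInf_le ⟨S, h1, rfl, h3⟩
  exact h4.trans h2

theorem srank_exists {K : Type} [Field K] {m d r : ℕ} (P : PN K m d) (hr : srank d P = r)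
    (hr0 : 0 < r) : ∃ (B : Finset (Pm K m)) (l : Pm K m → K), B.card = r ∧ (∀ a ∈ B, l a ≠ 0) ∧
      P.rep = ∑ a ∈ B, l a • nu d a.rep := by
  classical
  have hne : {r | ∃ S : Finset (PN K m d), ↑S ⊆ XSet K m d ∧ S.card = r ∧
    P.rep ∈ Submodule.span K (Projectivization.rep '' (S : Set (PN K m d)))}.Nonempty := by
    by_contra hne
    rw [Set.not_nonempty_iff_eq_empty] at hne
    have : srank d P = 0 := by
      unfold srank rankWrt
      rw [hne]; exact Nat.sInf_empty
    omega
  obtain ⟨S, h1, h2, h3⟩ := Nat.sInf_mem hne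
  have h2 : S.card = r := h2.trans hr
  obtain ⟨B, l, h4, h5⟩ := exists_B S h1 _ h3
  have hle : r ≤ (B.filter fun a => l a ≠ 0).card := by
    rw [← hr]
    apply srank_le' P _ l (fun a => a.rep) (fun a _ => a.rep_nonzero)
    rw [h5, Finset.sum_filter]
    refine Finset.sum_congr rfl fun a _ => ?_
    split_ifs with h
    · rfl
    · push Not at h; rw [h, zero_smul]
  have hle2 := Finset.card_filter_le B (fun a => l a ≠ 0)
  refine ⟨B.filter fun a => l a ≠ 0, l, by omega, ?_, ?_⟩
  · intro a ha; exact (Finset.mem_filter.1 ha).2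
  · rw [h5, Finset.sum_filter]
    refine Finset.sum_congr rfl fun a _ => ?_
    split_ifs with h
    · rfl
    · push Not at h; rw [h, zero_smul]

/-- product of forms -/
noncomputable def hmul {K : Type} [Field K] {m d t t' : ℕ} (h : t + t' = d) (f : Hd K m t) (g : Hd K m t') : Hd K m d :=
  ⟨(f : PR K m) * g, by
    rw [← h]
    exact ((mem_homogeneousSubmodule _ _).1 f.2).mul ((mem_homogeneousSubmodule _ _).1 g.2)⟩

theorem det_zero {K : Type} [Field K] {m d s t t' : ℕ} (P : PN K m d)
    (hP : P ∈ secantWrt (XSet K m d) s) (h : t + t' = d) {ι : Type} [Fintype ι] [DecidableEq ι]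
    (hι : s < Fintype.card ι) (f : ι → Hd K m t) (g : ι → Hd K m t') :
    (Matrix.of fun i j => P.rep (hmul h (f i) (g j))).det = 0 := by
  let F : Module.Dual K (Hd K m d) → K := fun y => (Matrix.of fun i j => y (hmul h (f i) (g j))).det
  have hF : F ∈ polyFunctions K (Module.Dual K (Hd K m d)) := by
    have : F = ∑ σ : Equiv.Perm ι, (Equiv.Perm.sign σ : ℤ) •
        ∏ i, (fun y : Module.Dual K (Hd K m d) => y (hmul h (f (σ i)) (g i))) := by
      funext y
      simp only [F, Matrix.det_apply, Finset.sum_apply, Pi.smul_apply, Finset.prod_apply,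
        Matrix.of_apply]
      rfl
    rw [this]
    apply Subalgebra.sum_mem
    intro σ _
    apply zsmul_mem
    apply Subalgebra.prod_mem
    intro i _
    apply Algebra.subset_adjoin
    exact ⟨LinearMap.applyₗ (hmul h (f (σ i)) (g i)), rfl⟩
  have := hP F hF ?_ 1
  · simpa [F] using this
  · rintro Q ⟨S, h1, h2, h3⟩ c
    obtain ⟨B, l, h4, h5⟩ := exists_B S h1 _ (Submodule.smul_mem _ c h3)
    rw [h5]
    by_contra hdet
    have hr := Matrix.rank_of_isUnit _ ((Matrix.isUnit_iff_isUnit_det _).2 (isUnit_iff_ne_zero.2 hdet))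
    have : (Matrix.of fun i j => (∑ a ∈ B, l a • nu d a.rep) (hmul h (f i) (g j))) =
      (Matrix.of fun (i : ι) (a : B) => l a * eval (a : Pm K m).rep (f i : PR K m)) *
      (Matrix.of fun (a : B) (j : ι) => eval (a : Pm K m).rep (g j : PR K m)) := by
      ext i j
      simp only [Matrix.of_apply, Matrix.mul_apply, LinearMap.sum_apply, LinearMap.smul_apply,
        nu_apply', smul_eq_mul, hmul, map_mul]
      rw [← Finset.sum_coe_sort]
      refine Finset.sum_congr rfl fun a _ => by ring
    rw [this] at hr
    have h6 := Matrix.rank_mul_le_left (Matrix.of fun (i : ι) (a : B) => l a * eval (a : Pm K m).rep (f i : PR K m)) 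
      (Matrix.of fun (a : B) (j : ι) => eval (a : Pm K m).rep (g j : PR K m))
    have h7 := Matrix.rank_le_card_width (Matrix.of fun (i : ι) (a : B) => l a * eval (a : Pm K m).rep (f i : PR K m))
    rw [Fintype.card_coe] at h7
    omega
end PartA

section PartB
open MvPolynomial

theorem poly_curve {K V : Type} [Field K] [AddCommGroup V] [Module K V] (F : V → K)
    (hF : F ∈ polyFunctions K V) (γ : K → V)
    (hγ : ∀ φ : V →ₗ[K] K, ∃ p : Polynomial K, ∀ ε, p.eval ε = φ (γ ε)) :
    ∃ p : Polynomial K, ∀ ε, p.eval ε = F (γ ε) := by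
  unfold polyFunctions at hF
  induction hF using Algebra.adjoin_induction with
  | mem x hx => obtain ⟨φ, rfl⟩ := hx; exact hγ φ
  | algebraMap r => exact ⟨Polynomial.C r, fun ε => by simp⟩
  | add x y _ _ hx hy =>
    obtain ⟨p, hp⟩ := hx
    obtain ⟨q, hq⟩ := hy
    exact ⟨p + q, fun ε => by simp [hp, hq]⟩
  | mul x y _ _ hx hy =>
    obtain ⟨p, hp⟩ := hx
    obtain ⟨q, hq⟩ := hy
    exact ⟨p * q, fun ε => by simp [hp, hq]⟩

theorem cone_zero {K : Type} [Field K] {m d k : ℕ} (F : Module.Dual K (Hd K m d) → K)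
    (hF : ∀ Q ∈ {Q : PN K m d | ∃ S : Finset (PN K m d), ↑S ⊆ XSet K m d ∧ S.card ≤ k ∧
      Q.rep ∈ Submodule.span K (Projectivization.rep '' (S : Set (PN K m d)))}, ∀ c : K, F (c • Q.rep) = 0)
    {ι : Type} (T : Finset ι) (c : ι → K)
    (u : ι → Fin (m+1) → K) (hu : ∀ i ∈ T, u i ≠ 0) (hk : T.card ≤ k)
    (hne : (∑ i ∈ T, c i • nu d (u i)) ≠ 0) (a : K) : F (a • ∑ i ∈ T, c i • nu d (u i)) = 0 := by
  obtain ⟨S, h1, h2, h3⟩ := exists_S (d := d) T c u hu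
  set y := ∑ i ∈ T, c i • nu d (u i) with hy
  obtain ⟨e, he⟩ := Projectivization.exists_smul_eq_mk_rep K y hne
  have := hF (Projectivization.mk K y hne) ⟨S, h1, h2.trans hk, by
    rw [← he]; exact Submodule.smul_mem _ (e : K) h3⟩ (a * (e⁻¹ : Kˣ))
  rw [← he, Units.smul_def, smul_smul, mul_assoc] at this
  simpa using this

theorem secant_mem {K : Type} [Field K] [CharZero K] [IsAlgClosed K] {m d k : ℕ} (P : PN K m d)
    (w0 w1 : Fin (m+1) → K) (hw : ∀ y : K, w0 + y • w1 ≠ 0) (ψ : Polynomial K →ₗ[K] K)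
    (g : Polynomial K) (hg : g.Monic) (h : ∀ f, ψ (g * f) = 0) {ι : Type} (T : Finset ι) (c : ι → K)
    (u : ι → Fin (m+1) → K) (hu : ∀ i ∈ T, u i ≠ 0)
    (hP : ∀ F : Hd K m d, P.rep F = ψ (pol w0 w1 F) + ∑ i ∈ T, c i * eval (u i) (F : PR K m))
    (hk : g.natDegree + T.card ≤ k) (hk1 : 1 ≤ k) : P ∈ secantWrt (XSet K m d) k := by
  classical
  intro F hF hFz a
  obtain ⟨q, E, hq0, hqE⟩ := xcurve ψ g hg h
  let co : ℕ → Module.Dual K (Hd K m d) := fun k =>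
    (Polynomial.lcoeff K k) ∘ₗ (pol w0 w1).toLinearMap ∘ₗ (Hd K m d).subtype
  have hco : ∀ k (F : Hd K m d), co k F = (pol w0 w1 (F : PR K m)).coeff k := fun _ _ => rfl
  let γ : K → Module.Dual K (Hd K m d) := fun ε =>
    ∑ k ∈ Finset.range (d+1), (q k).eval ε • co k + ∑ i ∈ T, c i • nu d (u i)
  have hdeg : ∀ F : Hd K m d, (pol w0 w1 (F : PR K m)).natDegree < d + 1 := fun F =>
    Nat.lt_succ_of_le (pol_natDegree w0 w1 _ ((mem_homogeneousSubmodule _ _).1 F.2))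
  have hγ0 : γ 0 = P.rep := by
    ext G
    rw [hP]
    simp only [γ, LinearMap.add_apply, LinearMap.sum_apply, LinearMap.smul_apply, smul_eq_mul,
      nu_apply', hco, hq0]
    congr 1
    conv_rhs => rw [Polynomial.as_sum_range' _ _ (hdeg G), map_sum]
    refine Finset.sum_congr rfl fun j _ => ?_
    rw [← Polynomial.C_mul_X_pow_eq_monomial, ← Polynomial.smul_eq_C_mul, map_smul, smul_eq_mul, mul_comm]
  have hγE : ∀ ε, ε ∉ E → F (a • γ ε) = 0 := by
    intro ε hε
    obtain ⟨Z, c', hZ⟩ := hqE ε hε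
    have hy : γ ε = ∑ i ∈ (Finset.univ : Finset (Fin g.natDegree)).disjSum T,
        (Sum.elim c' c i) • nu d (Sum.elim (fun i => w0 + Z i • w1) u i) := by
      rw [Finset.sum_disjSum]
      simp only [γ, Sum.elim_inl, Sum.elim_inr]
      congr 1
      ext G
      simp only [LinearMap.sum_apply, LinearMap.smul_apply, smul_eq_mul, nu_apply', hco, hZ, ← pol_eval]
      simp only [Finset.sum_mul]
      rw [Finset.sum_comm]
      refine Finset.sum_congr rfl fun i _ => ?_
      rw [Polynomial.eval_eq_sum_range' (hdeg G), Finset.mul_sum]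
      refine Finset.sum_congr rfl fun j _ => by ring
    by_cases h0 : γ ε = 0
    · have h1 : (∑ i ∈ (Finset.univ : Finset Unit), (1 : K) • nu d w0) ≠ 0 := by
        simp only [Finset.univ_unique, Finset.sum_const, Finset.card_singleton, one_smul]
        apply nu_ne_zero
        simpa using hw 0
      have := cone_zero F hFz (Finset.univ : Finset Unit) (fun _ => 1) (fun _ => w0)
        (fun _ _ => by simpa using hw 0) (by simpa using hk1) h1 0
      rw [zero_smul] at this
      rw [h0, smul_zero, this]
    · rw [hy] at h0 ⊢
      refine cone_zero F hFz _ _ _ ?_ ?_ h0 a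
      · rintro (i | i) hi
        · exact hw _
        · exact hu i (by simpa using hi)
      · simpa using hk
  obtain ⟨p, hp⟩ := poly_curve F hF (fun ε => a • γ ε) (by
    intro φ
    refine ⟨Polynomial.C a * (∑ k ∈ Finset.range (d+1), q k * Polynomial.C (φ (co k)) +
      Polynomial.C (φ (∑ i ∈ T, c i • nu d (u i)))), fun ε => ?_⟩
    simp only [γ, map_smul, map_add, map_sum, Polynomial.eval_mul, Polynomial.eval_add,
      Polynomial.eval_C, Polynomial.eval_finsetSum, smul_eq_mul])
  have hp0 : p = 0 := by
    apply Polynomial.eq_zero_of_infinite_isRoot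
    refine Set.Infinite.mono ?_ (Set.Finite.infinite_compl E.finite_toSet)
    intro ε hε
    change p.eval ε = 0
    rw [hp]; exact hγE ε hε
  have := hp 0
  rw [hp0, hγ0] at this
  simpa using this.symm
end PartB

section PartC
open MvPolynomial

/-- the line through two points -/
noncomputable def ln {K : Type} [Field K] {m : ℕ} (p a : Pm K m) : Submodule K (Fin (m+1) → K) :=
  Submodule.span K {p.rep, a.rep}

theorem ln_left {K : Type} [Field K] {m : ℕ} (p a : Pm K m) : p.rep ∈ ln p a :=
  Submodule.subset_span (by simp)

theorem ln_right {K : Type} [Field K] {m : ℕ} (p a : Pm K m) : a.rep ∈ ln p a :=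
  Submodule.subset_span (by simp)

theorem ln_finrank {K : Type} [Field K] {m : ℕ} (p a : Pm K m) (h : p ≠ a) :
    Module.finrank K (ln p a) = 2 := by
  have := finrank_span_eq_card ((Projectivization.linearIndependent_pair_iff_ne).2 h)
  rw [Fintype.card_fin] at this
  have e : ln p a = Submodule.span K (Set.range ![p.rep, a.rep]) := by
    rw [Matrix.range_cons_cons_empty]; rfl
  rw [e]
  exact this

theorem ln_eq {K : Type} [Field K] {m : ℕ} (p a x y : Pm K m) (h : p ≠ a) (hxy : x ≠ y)
    (hx : x.rep ∈ ln p a) (hy : y.rep ∈ ln p a) : ln x y = ln p a := by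
  apply Submodule.eq_of_le_of_finrank_le
  · unfold ln
    rw [Submodule.span_le]
    rintro z (rfl | rfl)
    · exact hx
    · exact hy
  · rw [ln_finrank _ _ h, ln_finrank _ _ hxy]

theorem rep_notMem {K : Type} [Field K] {m : ℕ} (p a : Pm K m) (h : p ≠ a) :
    p.rep ∉ Submodule.span K {a.rep} := by
  intro hh
  rw [Submodule.mem_span_singleton] at hh
  obtain ⟨c, hc⟩ := hh
  have := LinearIndependent.pair_iff.1 ((Projectivization.linearIndependent_pair_iff_ne).2 h) 1 (-c)
    (by rw [← hc]; simp)
  simp at this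

theorem lemA {K : Type} [Field K] {m : ℕ} (p : Pm K m) (t : ℕ) : ∀ (X : Finset (Pm K m)), p ∉ X →
    X.card ≤ 2 * t → 
    (∀ a ∈ X, ∀ Y ⊆ X, (∀ x ∈ Y, ln p x = ln p a) → Y.card ≤ t) →
    ∃ F : PR K m, F.IsHomogeneous t ∧ eval p.rep F = 1 ∧ ∀ x ∈ X, eval x.rep F = 0 := by
  classical
  induction t with
  | zero =>
    intro X _ hX _
    have : X = ∅ := by simpa using hX
    subst this
    exact ⟨1, isHomogeneous_one _ _, by simp, by simp⟩
  | succ t ih =>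
    intro X hpX hX hcl
    have key : ∀ (Y : Finset (Pm K m)) (W : Submodule K (Fin (m+1) → K)), Y ⊆ X → Y.card ≤ 2 * t →
        (∀ a ∈ Y, ∀ Y' ⊆ Y, (∀ x ∈ Y', ln p x = ln p a) → Y'.card ≤ t) → p.rep ∉ W →
        (∀ x ∈ X, x ∉ Y → x.rep ∈ W) →
        ∃ F : PR K m, F.IsHomogeneous (t+1) ∧ eval p.rep F = 1 ∧ ∀ x ∈ X, eval x.rep F = 0 := by
      intro Y W hYX hY1 hY2 hpW hW
      obtain ⟨F, hF1, hF2, hF3⟩ := ih Y (fun h => hpX (hYX h)) hY1 hY2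
      obtain ⟨φ, hφ1, hφ2⟩ := exists_lform W p.rep hpW
      refine ⟨F * lform φ, hF1.mul (lform_homog φ), ?_, ?_⟩
      · rw [map_mul, hF2, lform_eval, hφ1, one_mul]
      · intro x hx
        rw [map_mul, lform_eval]
        by_cases hxY : x ∈ Y
        · rw [hF3 x hxY, zero_mul]
        · rw [hφ2 _ (hW x hx hxY), mul_zero]
    rcases X.eq_empty_or_nonempty with rfl | hne
    · exact key ∅ ⊥ (by simp) (by simp) (by simp) (by simpa using p.rep_nonzero) (by simp)
    let n : Pm K m → ℕ := fun x => (X.filter fun y => ln p y = ln p x).card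
    obtain ⟨a, haX, ha⟩ := Finset.exists_max_image X n hne
    have hpa : p ≠ a := by rintro rfl; exact hpX haX
    rcases (X.filter fun x => ln p x ≠ ln p a).eq_empty_or_nonempty with hX' | hX'
    · have hall : ∀ x ∈ X, ln p x = ln p a := by
        intro x hx
        by_contra hc
        have : x ∈ (X.filter fun x => ln p x ≠ ln p a) := Finset.mem_filter.2 ⟨hx, hc⟩
        rw [hX'] at this; simp at this
      have hXc := hcl a haX X subset_rfl hall
      have hc := Finset.card_erase_of_mem haX
      refine key (X.erase a) (Submodule.span K {a.rep}) (Finset.erase_subset _ _) (by omega) ?_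
        (rep_notMem p a hpa) ?_
      · intro _ _ Y hY _
        have := Finset.card_le_card hY
        omega
      · intro x hx hxY
        have : x = a := by
          by_contra hh; exact hxY (Finset.mem_erase.2 ⟨hh, hx⟩)
        rw [this]; exact Submodule.mem_span_singleton_self _
    · obtain ⟨b, hbX', hb⟩ := Finset.exists_max_image _ n hX'
      obtain ⟨hbX, hba⟩ := Finset.mem_filter.1 hbX'
      have hpb : p ≠ b := by rintro rfl; exact hpX hbX
      have hab : a ≠ b := by rintro rfl; exact hba rfl
      have hc1 := Finset.card_erase_of_mem haX
      have hbm : b ∈ X.erase a := Finset.mem_erase.2 ⟨hab.symm, hbX⟩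
      have hc2 := Finset.card_erase_of_mem hbm
      refine key ((X.erase a).erase b) (ln a b)
        ((Finset.erase_subset _ _).trans (Finset.erase_subset _ _)) (by omega) ?_ ?_ ?_
      · intro x hx Y hY hYx
        have hYX : Y ⊆ X := hY.trans ((Finset.erase_subset _ _).trans (Finset.erase_subset _ _))
        have hxX : x ∈ X := (Finset.erase_subset _ _).trans (Finset.erase_subset _ _) hx
        have haY : a ∉ Y := fun h => by simpa using hY h
        have hbY : b ∉ Y := fun h => by simpa using hY h
        by_cases hxa : ln p x = ln p a
        · have := hcl a haX (insert a Y) (Finset.insert_subset haX hYX) (by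
            intro z hz
            rcases Finset.mem_insert.1 hz with rfl | hz
            · rfl
            · rw [hYx z hz, hxa])
          rw [Finset.card_insert_of_notMem haY] at this
          omega
        by_cases hxb : ln p x = ln p b
        · have := hcl b hbX (insert b Y) (Finset.insert_subset hbX hYX) (by
            intro z hz
            rcases Finset.mem_insert.1 hz with rfl | hz
            · rfl
            · rw [hYx z hz, hxb])
          rw [Finset.card_insert_of_notMem hbY] at this
          omega
        have h1 : Y.card ≤ n x := Finset.card_le_card (fun z hz =>
          Finset.mem_filter.2 ⟨hYX hz, hYx z hz⟩)
        have h2 : n x ≤ n b := hb x (Finset.mem_filter.2 ⟨hxX, hxa⟩)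
        have h3 : n b ≤ n a := ha b hbX
        have h4 : n x + n a + n b ≤ X.card := by
          simp only [n]
          rw [← Finset.card_union_of_disjoint, ← Finset.card_union_of_disjoint]
          · apply Finset.card_le_card
            intro z hz
            simp only [Finset.mem_union, Finset.mem_filter] at hz
            tauto
          · rw [Finset.disjoint_left]
            intro z hz hz2
            simp only [Finset.mem_union, Finset.mem_filter] at hz hz2
            rcases hz with hz | hz
            · exact hxb (hz.2.symm.trans hz2.2)
            · exact hba (hz2.2.symm.trans hz.2)
          · rw [Finset.disjoint_left]
            intro z hz hz2
            simp only [Finset.mem_filter] at hz hz2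
            exact hxa (hz.2.symm.trans hz2.2)
        omega
      · intro hmem
        have e1 := ln_eq a b p a hab hpa hmem (ln_left a b)
        have e2 := ln_eq a b p b hab hpb hmem (ln_right a b)
        exact hba (e2.trans e1.symm)
      · intro x hx hxY
        simp only [Finset.mem_erase, not_and] at hxY
        by_cases hxb : x = b
        · rw [hxb]; exact ln_right a b
        · by_cases hxa : x = a
          · rw [hxa]; exact ln_left a b
          · exact absurd hx (hxY hxb hxa)

open Classical in
/-- independence of conditions -/
def Indep {K : Type} [Field K] {m : ℕ} (t : ℕ) (B : Finset (Pm K m)) : Prop :=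
  ∀ p ∈ B, ∃ F : PR K m, F.IsHomogeneous t ∧ eval p.rep F = 1 ∧ ∀ x ∈ B, x ≠ p → eval x.rep F = 0

theorem indepA {K : Type} [Field K] {m : ℕ} (t : ℕ) (B : Finset (Pm K m)) (hB : B.card ≤ 2 * t + 1)
    (h : ∀ p ∈ B, ∀ a ∈ B, p ≠ a → ∀ Y ⊆ B, (∀ x ∈ Y, x.rep ∈ ln p a) → Y.card ≤ t + 1) :
    Indep t B := by
  classical
  intro p hp
  obtain ⟨F, h1, h2, h3⟩ := lemA p t (B.erase p) (by simp) (by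
    rw [Finset.card_erase_of_mem hp]; omega) (by
    intro a ha Y hY hYa
    have hpY : p ∉ Y := fun h => by simpa using hY h
    obtain ⟨hap, haB⟩ := Finset.mem_erase.1 ha
    have := h p hp a haB hap.symm (insert p Y)
      (Finset.insert_subset hp (hY.trans (Finset.erase_subset _ _))) (by
        intro x hx
        rcases Finset.mem_insert.1 hx with rfl | hx
        · exact ln_left _ _
        · rw [← hYa x hx]; exact ln_right _ _)
    rw [Finset.card_insert_of_notMem hpY] at this
    omega)
  exact ⟨F, h1, h2, fun x hx hxp => h3 x (Finset.mem_erase.2 ⟨hxp, hx⟩)⟩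

open Classical in
theorem cover_le {K : Type} [Field K] {m d s t t' : ℕ} (P : PN K m d)
    (hP : P ∈ secantWrt (XSet K m d) s) (h : t + t' = d) (B : Finset (Pm K m)) (l : Pm K m → K)
    (hl : ∀ a ∈ B, l a ≠ 0) (hB : P.rep = ∑ a ∈ B, l a • nu d a.rep) (B1 B2 : Finset (Pm K m))
    (hu : B1 ∪ B2 = B) (h1 : Indep t B1) (h2 : Indep t' B2) : (B1 ∩ B2).card ≤ s := by
  by_contra hlt
  push Not at hlt
  choose f hf1 hf2 hf3 using h1
  choose g hg1 hg2 hg3 using h2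
  let T := B1 ∩ B2
  have hT1 : ∀ x : T, (x : Pm K m) ∈ B1 := fun x => (Finset.mem_inter.1 x.2).1
  have hT2 : ∀ x : T, (x : Pm K m) ∈ B2 := fun x => (Finset.mem_inter.1 x.2).2
  have hd := det_zero P hP h (ι := T) (by simpa using hlt)
    (fun x => ⟨f x (hT1 x), (mem_homogeneousSubmodule _ _).2 (hf1 _ _)⟩)
    (fun x => ⟨g x (hT2 x), (mem_homogeneousSubmodule _ _).2 (hg1 _ _)⟩)
  have hdiag : (Matrix.of fun i j : T => P.rep (hmul h
    (⟨f i (hT1 i), (mem_homogeneousSubmodule _ _).2 (hf1 _ _)⟩ : Hd K m t)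
    (⟨g j (hT2 j), (mem_homogeneousSubmodule _ _).2 (hg1 _ _)⟩ : Hd K m t'))) =
      Matrix.diagonal (fun i : T => l i) := by
    ext i j
    rw [Matrix.of_apply, hB]
    simp only [LinearMap.sum_apply, LinearMap.smul_apply, nu_apply', hmul, map_mul, smul_eq_mul]
    rw [Finset.sum_eq_single (i : Pm K m)]
    · rw [hf2, Matrix.diagonal_apply]
      split_ifs with hij
      · subst hij; rw [hg2]; ring
      · rw [hg3 _ _ _ (hT2 i) (fun hh => hij (Subtype.ext hh))]; ring
    · intro x hx hxi
      by_cases hx1 : x ∈ B1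
      · rw [hf3 _ _ x hx1 hxi]; ring
      · have hx2 : x ∈ B2 := by
          rw [← hu, Finset.mem_union] at hx; tauto
        rw [hg3 _ _ x hx2 (by rintro rfl; exact hx1 (hT1 j))]; ring
    · intro hi
      exact absurd (by rw [← hu]; exact Finset.mem_union_left _ (hT1 i)) hi
  rw [hdiag, Matrix.det_diagonal, Finset.prod_eq_zero_iff] at hd
  obtain ⟨i, _, hi⟩ := hd
  exact hl i (by rw [← hu]; exact Finset.mem_union_left _ (hT1 i)) hi

theorem cover_exists {α : Type} [DecidableEq α] (X : Finset α) (a b : ℕ) (ha : a ≤ X.card) (hb : b ≤ X.card)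
    (hab : X.card ≤ a + b) : ∃ X1 X2, X1 ∪ X2 = X ∧ X1.card = a ∧ X2.card = b := by
  obtain ⟨X1, h1, h2⟩ := Finset.exists_subset_card_eq ha
  have hc := Finset.card_sdiff_of_subset h1
  obtain ⟨X2, h3, h4, h5⟩ := Finset.exists_subsuperset_card_eq (Finset.sdiff_subset : X \ X1 ⊆ X)
    (n := b) (by omega) hb
  refine ⟨X1, X2, ?_, h2, h5⟩
  apply Finset.Subset.antisymm
  · exact Finset.union_subset h1 h4
  · intro x hx
    by_cases hx1 : x ∈ X1
    · exact Finset.mem_union_left _ hx1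
    · exact Finset.mem_union_right _ (h3 (Finset.mem_sdiff.2 ⟨hx, hx1⟩))

open Classical in
theorem step1 {K : Type} [Field K] {m d s t t' : ℕ} (P : PN K m d)
    (hP : P ∈ secantWrt (XSet K m d) s) (h : t + t' = d) (B : Finset (Pm K m)) (l : Pm K m → K)
    (hl : ∀ a ∈ B, l a ≠ 0) (hB : P.rep = ∑ a ∈ B, l a • nu d a.rep) (htt : t ≤ t') (htt' : t' ≤ t + 1)
    (hs : 2 * s + 2 ≤ d) (hr : B.card + 2 ≤ d + s) (hr' : s < B.card) :
    ∃ p ∈ B, ∃ a ∈ B, p ≠ a ∧ t + 2 ≤ (B.filter fun x => x.rep ∈ ln p a).card ∧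
      (B.filter fun x => x.rep ∉ ln p a).card ≤ t := by
  by_contra hcon
  push Not at hcon
  by_cases hA : ∀ p ∈ B, ∀ a ∈ B, p ≠ a → (B.filter fun x => x.rep ∈ ln p a).card ≤ t + 1
  · obtain ⟨B1, B2, hu, h1, h2⟩ := cover_exists B (min B.card (2*t+1)) (min B.card (2*t'+1))
      (by omega) (by omega) (by omega)
    have hi := Finset.card_union_add_card_inter B1 B2
    rw [hu] at hi
    have hs1 : B1 ⊆ B := hu ▸ Finset.subset_union_left
    have hs2 : B2 ⊆ B := hu ▸ Finset.subset_union_right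
    have := cover_le P hP h B l hl hB B1 B2 hu
      (indepA t B1 (by omega) (by
        intro p hp a ha hpa Y hY hYl
        refine le_trans (Finset.card_le_card ?_) (hA p (hs1 hp) a (hs1 ha) hpa)
        intro y hy; exact Finset.mem_filter.2 ⟨hs1 (hY hy), hYl y hy⟩))
      (indepA t' B2 (by omega) (by
        intro p hp a ha hpa Y hY hYl
        refine (le_trans (Finset.card_le_card ?_) (hA p (hs2 hp) a (hs2 ha) hpa)).trans (by omega)
        intro y hy; exact Finset.mem_filter.2 ⟨hs2 (hY hy), hYl y hy⟩))
    omega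
  · push Not at hA
    obtain ⟨p, hp, a, ha, hpa, hcard⟩ := hA
    have hS := hcon p hp a ha hpa (by omega)
    set L := B.filter fun x => x.rep ∈ ln p a with hL
    set S := B.filter fun x => x.rep ∉ ln p a with hSdef
    have hLS : L.card + S.card = B.card := Finset.card_filter_add_card_filter_not _
    obtain ⟨L1, L2, hLu, hL1, hL2⟩ := cover_exists L (t+1) (t'+1) (by omega) (by omega) (by omega)
    obtain ⟨S1, S2, hSu, hS1, hS2⟩ := cover_exists S t t' (by omega) (by omega) (by omega)
    have hind : ∀ (k : ℕ) (L' S' : Finset (Pm K m)), L' ⊆ L → S' ⊆ S → L'.card = k + 1 → S'.card = k →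
        Indep k (L' ∪ S') := by
      intro k L' S' hL' hS' hLc hSc
      apply indepA
      · have := Finset.card_union_le L' S'; omega
      intro p' hp' a' ha' hpa' Y hY hYl
      by_cases hM : ln p' a' = ln p a
      · have : Y ⊆ L' := by
          intro y hy
          rcases Finset.mem_union.1 (hY hy) with h | h
          · exact h
          · exfalso
            have h1 := (Finset.mem_filter.1 (hS' h)).2
            exact h1 (hM ▸ hYl y hy)
        have := Finset.card_le_card this
        omega
      · have h1 : (Y ∩ L').card ≤ 1 := by
          rw [Finset.card_le_one]
          intro x hx y hy
          by_contra hxy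
          rw [Finset.mem_inter] at hx hy
          apply hM
          rw [← ln_eq p' a' x y hpa' hxy (hYl x hx.1) (hYl y hy.1)]
          exact ln_eq p a x y hpa hxy (Finset.mem_filter.1 (hL' hx.2)).2 (Finset.mem_filter.1 (hL' hy.2)).2
        have h2 : Y ⊆ (Y ∩ L') ∪ S' := by
          intro y hy
          have := hY hy
          simp only [Finset.mem_union, Finset.mem_inter] at this ⊢
          tauto
        have h3 := Finset.card_le_card h2
        have h4 := Finset.card_union_le (Y ∩ L') S'
        omega
    have hL1s : L1 ⊆ L := hLu ▸ Finset.subset_union_left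
    have hL2s : L2 ⊆ L := hLu ▸ Finset.subset_union_right
    have hS1s : S1 ⊆ S := hSu ▸ Finset.subset_union_left
    have hS2s : S2 ⊆ S := hSu ▸ Finset.subset_union_right
    have hdisj : ∀ L' S' : Finset (Pm K m), L' ⊆ L → S' ⊆ S → Disjoint L' S' := by
      intro L' S' hL' hS'
      rw [Finset.disjoint_left]
      intro x hx hx'
      exact (Finset.mem_filter.1 (hS' hx')).2 (Finset.mem_filter.1 (hL' hx)).2
    have hu : (L1 ∪ S1) ∪ (L2 ∪ S2) = B := by
      rw [Finset.union_union_union_comm, hLu, hSu, hL, hSdef, Finset.filter_union_filter_not_eq]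
    have := cover_le P hP h B l hl hB _ _ hu (hind t L1 S1 hL1s hS1s hL1 hS1)
      (hind t' L2 S2 hL2s hS2s hL2 hS2)
    have hi := Finset.card_union_add_card_inter (L1 ∪ S1) (L2 ∪ S2)
    rw [hu, Finset.card_union_of_disjoint (hdisj _ _ hL1s hS1s),
      Finset.card_union_of_disjoint (hdisj _ _ hL2s hS2s)] at hi
    omega
end PartC

section PartE1
open Polynomial

theorem xinf {K : Type} [Field K] [CharZero K] {ι : Type} (L : Finset ι) (u v l : ι → K)
    (t t' : ℕ) (htt : t' ≤ t + 1) (huv : ∀ x ∈ L, u x ≠ 0 ∨ v x ≠ 0) :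
    ∃ β : K, (∀ x ∈ L, v x - β * u x ≠ 0) ∧ ∃ g0 : K[X], g0.Monic ∧ g0.natDegree = t + 1 ∧
      ∀ f : K[X], f.natDegree + g0.natDegree ≤ t + t' →
        ∑ x ∈ L, l x * (v x - β * u x) ^ (t + t') * (g0 * f).eval (u x / (v x - β * u x)) = 0 := by
  classical
  -- linear algebra
  let A : (Fin (t+2) → K) →ₗ[K] (Fin t' → K) := Matrix.toLin' (Matrix.of fun (k : Fin t') (j : Fin (t+2)) =>
    ∑ x ∈ L, l x * (u x ^ (t + 1 - (j:ℕ)) * v x ^ (j:ℕ)) * (u x ^ (t' - 1 - (k:ℕ)) * v x ^ (k:ℕ)))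
  have hker : LinearMap.ker A ≠ ⊥ := LinearMap.ker_ne_bot_of_finrank_lt (by simp; omega)
  obtain ⟨a, ha, ha0⟩ := Submodule.exists_mem_ne_zero_of_ne_bot hker
  let G : ι → K := fun x => ∑ j : Fin (t+2), a j * (u x ^ (t + 1 - (j:ℕ)) * v x ^ (j:ℕ))
  have hG : ∀ k : ℕ, ∀ n, n + k + 1 = t' → ∑ x ∈ L, l x * G x * (u x ^ n * v x ^ k) = 0 := by
    intro k n hnk
    have := congrFun (LinearMap.mem_ker.1 ha) ⟨k, by omega⟩
    simp only [A, Matrix.toLin'_apply, Matrix.mulVec, dotProduct, Matrix.of_apply, Pi.zero_apply] at this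
    rw [← this]
    simp only [Finset.sum_mul]
    rw [Finset.sum_comm]
    refine Finset.sum_congr rfl fun x _ => ?_
    have e : t' - 1 - k = n := by omega
    rw [e]
    simp only [G]
    rw [Finset.mul_sum, Finset.sum_mul]
    refine Finset.sum_congr rfl fun j _ => by ring
  let q : K[X] := ∑ j : Fin (t+2), C (a j) * X ^ (j:ℕ)
  have hq : q ≠ 0 := by
    intro hq
    apply ha0
    funext j
    have := congrArg (fun p => coeff p (j:ℕ)) hq
    simp only [q, finsetSum_coeff, coeff_C_mul, coeff_X_pow, coeff_zero] at this
    rw [Finset.sum_eq_single j] at this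
    · simpa using this
    · intro b _ hb
      have : (j:ℕ) ≠ b := fun h => hb (Fin.ext h.symm)
      simp [this]
    · simp
  obtain ⟨β, hβ⟩ := Infinite.exists_notMem_finset (q.roots.toFinset ∪ L.image fun x => v x / u x)
  rw [Finset.mem_union, not_or] at hβ
  have hqβ : q.eval β ≠ 0 := by
    intro h
    apply hβ.1
    rw [Multiset.mem_toFinset, mem_roots hq]; exact h
  have hμ : ∀ x ∈ L, v x - β * u x ≠ 0 := by
    intro x hx h
    by_cases hu : u x = 0
    · rcases huv x hx with h1 | h1
      · exact h1 hu
      · rw [hu] at h; simp at h; exact h1 h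
    · apply hβ.2
      rw [Finset.mem_image]
      refine ⟨x, hx, ?_⟩
      field_simp
      linear_combination h
  have hG2 : ∀ β : K, ∀ j n k, n + k + j + 1 = t' →
      ∑ x ∈ L, l x * G x * (u x ^ n * v x ^ k * (v x - β * u x) ^ j) = 0 := by
    intro β j
    induction j with
    | zero => intro n k h; simpa using hG k n h
    | succ j ih =>
      intro n k h
      have h1 := ih n (k+1) (by omega)
      have h2 := ih (n+1) k (by omega)
      have : ∑ x ∈ L, l x * G x * (u x ^ n * v x ^ k * (v x - β * u x) ^ (j+1)) =
        ∑ x ∈ L, l x * G x * (u x ^ n * v x ^ (k+1) * (v x - β * u x) ^ j) - 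
        β * ∑ x ∈ L, l x * G x * (u x ^ (n+1) * v x ^ k * (v x - β * u x) ^ j) := by
        rw [Finset.mul_sum, ← Finset.sum_sub_distrib]
        refine Finset.sum_congr rfl fun x _ => by ring
      rw [this, h1, h2]; simp
  let g : K[X] := ∑ j : Fin (t+2), C (a j) * (X ^ (t + 1 - (j:ℕ)) * (1 + C β * X) ^ (j:ℕ))
  have hlin : (1 + C β * X : K[X]).natDegree ≤ 1 := by
    compute_degree
  have hgd : g.natDegree ≤ t + 1 := by
    apply natDegree_sum_le_of_forall_le
    intro j _
    refine (natDegree_C_mul_le _ _).trans ?_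
    refine natDegree_mul_le.trans ?_
    have h1 := natDegree_X_pow_le (R := K) (t + 1 - (j:ℕ))
    have h2 := natDegree_pow_le_of_le (j:ℕ) hlin
    have := j.2
    omega
  have hgc : g.coeff (t+1) = q.eval β := by
    simp only [g, q, finsetSum_coeff, coeff_C_mul, eval_finsetSum, eval_mul, eval_C, eval_pow, eval_X]
    refine Finset.sum_congr rfl fun j _ => ?_
    congr 1
    have hj : t + 1 = (j:ℕ) + (t + 1 - (j:ℕ)) := by have := j.2; omega
    conv_lhs => rw [hj]
    rw [Nat.add_sub_cancel_left, coeff_X_pow_mul]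
    have := coeff_pow_of_natDegree_le (m := (j:ℕ)) hlin
    rw [mul_one] at this
    rw [this]
    simp [coeff_one]
  have hgd' : g.natDegree = t + 1 := le_antisymm hgd (le_natDegree_of_ne_zero (by rw [hgc]; exact hqβ))
  have hge : ∀ x ∈ L, (v x - β * u x) ^ (t+1) * g.eval (u x / (v x - β * u x)) = G x := by
    intro x hx
    have hx := hμ x hx
    simp only [g, G, eval_finsetSum, eval_mul, eval_C, eval_pow, eval_add, eval_one, eval_X]
    rw [Finset.mul_sum]
    refine Finset.sum_congr rfl fun j _ => ?_
    have hj : t + 1 = (t + 1 - (j:ℕ)) + (j:ℕ) := by have := j.2; omega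
    have e : (1 + β * (u x / (v x - β * u x))) = v x / (v x - β * u x) := by
      field_simp; ring
    rw [e, div_pow, div_pow]
    conv_lhs => rw [hj, pow_add]
    simp only [Nat.add_sub_cancel]
    field_simp
  refine ⟨β, hμ, C (q.eval β)⁻¹ * g, ?_, ?_, ?_⟩
  · have : g.leadingCoeff = q.eval β := by rw [leadingCoeff, hgd', hgc]
    rw [← this, mul_comm]
    exact monic_mul_leadingCoeff_inv (by intro h; rw [h] at this; simp at this; exact hqβ this.symm)
  · rw [natDegree_C_mul (inv_ne_zero hqβ), hgd']
  · intro f hf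
    rw [natDegree_C_mul (inv_ne_zero hqβ), hgd'] at hf
    obtain ⟨c, rfl⟩ : ∃ c, t' = c + 1 := ⟨t' - 1, by omega⟩
    have hfe : ∀ x ∈ L, (v x - β * u x) ^ c * f.eval (u x / (v x - β * u x)) =
        ∑ k ∈ Finset.range (c+1), f.coeff k * (u x ^ k * (v x - β * u x) ^ (c - k)) := by
      intro x hx
      have hx := hμ x hx
      rw [eval_eq_sum_range' (n := c+1) (by omega), Finset.mul_sum]
      refine Finset.sum_congr rfl fun k hk => ?_
      rw [Finset.mem_range] at hk
      have : c = (c - k) + k := by omega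
      conv_lhs => rw [this, pow_add]
      rw [div_pow]
      field_simp
    have : ∀ x ∈ L, l x * (v x - β * u x) ^ (t + (c+1)) * (C (q.eval β)⁻¹ * g * f).eval (u x / (v x - β * u x)) =
        (q.eval β)⁻¹ * ∑ k ∈ Finset.range (c+1), f.coeff k * (l x * G x * (u x ^ k * v x ^ 0 * (v x - β * u x) ^ (c - k))) := by
      intro x hx
      have e : ∑ k ∈ Finset.range (c+1), f.coeff k * (l x * G x * (u x ^ k * v x ^ 0 * (v x - β * u x) ^ (c - k))) =
        l x * G x * ∑ k ∈ Finset.range (c+1), f.coeff k * (u x ^ k * (v x - β * u x) ^ (c - k)) := by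
        generalize G x = G0
        rw [Finset.mul_sum]
        refine Finset.sum_congr rfl fun k _ => by ring
      rw [e, ← hfe x hx, ← hge x hx, eval_mul, eval_mul, eval_C]
      ring
    rw [Finset.sum_congr rfl this, ← Finset.mul_sum, Finset.sum_comm]
    rw [Finset.sum_eq_zero, mul_zero]
    intro k hk
    rw [Finset.mem_range] at hk
    rw [← Finset.mul_sum, hG2 β (c - k) k 0 (by omega), mul_zero]
end PartE1

section PartE2

theorem xcount {K : Type} [Field K] {ι : Type} (L : Finset ι) (y c : ι → K)
    (hy : Set.InjOn y L) (hc : ∀ x ∈ L, c x ≠ 0) (ψ : Polynomial K →ₗ[K] K) (g : Polynomial K) (hg : g.Monic)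
    (d : ℕ) (h1 : ∀ f : Polynomial K, f.natDegree ≤ d → ψ f = ∑ x ∈ L, c x * f.eval (y x))
    (h2 : ∀ f, ψ (g * f) = 0) (h3 : g.natDegree < L.card) : d + 2 ≤ L.card + g.natDegree := by
  classical
  by_contra hcon
  have hroot : ∀ i ∈ L, g.eval (y i) = 0 := by
    intro i hi
    let f : Polynomial K := ∏ j ∈ L.erase i, (Polynomial.X - Polynomial.C (y j))
    have hf : f.natDegree = L.card - 1 := by
      rw [Polynomial.natDegree_prod_of_monic _ _ (fun j _ => Polynomial.monic_X_sub_C _)]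
      simp [Finset.card_erase_of_mem hi]
    have hd : (g * f).natDegree ≤ d := by
      refine Polynomial.natDegree_mul_le.trans ?_
      omega
    have h4 := h1 _ hd
    rw [h2, Finset.sum_eq_single i] at h4
    · rw [Polynomial.eval_mul] at h4
      have hfi : f.eval (y i) ≠ 0 := by
        simp only [f, Polynomial.eval_prod, Polynomial.eval_sub, Polynomial.eval_X, Polynomial.eval_C]
        rw [Finset.prod_ne_zero_iff]
        intro j hj
        rw [Finset.mem_erase] at hj
        rw [sub_ne_zero]
        intro h
        exact hj.1 (hy hj.2 hi h.symm)
      have := hc i hi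
      rcases mul_eq_zero.1 h4.symm with h | h
      · exact absurd h this
      · rcases mul_eq_zero.1 h with h | h
        · exact h
        · exact absurd h hfi
    · intro j hj hji
      rw [Polynomial.eval_mul]
      have : f.eval (y j) = 0 := by
        simp only [f, Polynomial.eval_prod]
        apply Finset.prod_eq_zero (Finset.mem_erase.2 ⟨hji, hj⟩)
        simp
      rw [this]; simp
    · intro h; exact absurd hi h
  have hsub : L.image y ⊆ g.roots.toFinset := by
    intro z hz
    obtain ⟨i, hi, rfl⟩ := Finset.mem_image.1 hz
    rw [Multiset.mem_toFinset, Polynomial.mem_roots hg.ne_zero]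
    exact hroot i hi
  have h5 := Finset.card_le_card hsub
  rw [Finset.card_image_of_injOn hy] at h5
  have h6 := Multiset.toFinset_card_le g.roots
  have h7 := Polynomial.card_roots' g
  omega

open MvPolynomial

theorem sforms {K : Type} [Field K] {m : ℕ} (W : Submodule K (Fin (m+1) → K)) (S : Finset (Pm K m))
    (hS : ∀ q ∈ S, q.rep ∉ W) (k : ℕ) (hk : S.card ≤ k) (q : Pm K m) (hq : q ∈ S) :
    ∃ F : PR K m, F.IsHomogeneous k ∧ eval q.rep F = 1 ∧ (∀ q' ∈ S, q' ≠ q → eval q'.rep F = 0) ∧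
      ∀ w0 ∈ W, ∀ w1 ∈ W, pol w0 w1 F = 0 := by
  classical
  obtain ⟨φ, hφ1, hφ0⟩ := exists_lform W q.rep (hS q hq)
  have hex : ∀ q' : Pm K m, ∃ φ' : Module.Dual K (Fin (m+1) → K), q' ≠ q →
      φ' q.rep = 1 ∧ φ' q'.rep = 0 := by
    intro q'
    by_cases h : q' = q
    · exact ⟨0, fun h' => absurd h h'⟩
    · obtain ⟨φ', h1, h2⟩ := exists_lform (Submodule.span K {q'.rep}) q.rep (rep_notMem q q' (Ne.symm h))
      exact ⟨φ', fun _ => ⟨h1, h2 _ (Submodule.mem_span_singleton_self _)⟩⟩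
  choose φ' hφ' using hex
  refine ⟨lform φ ^ (1 + (k - S.card)) * ∏ q' ∈ S.erase q, lform (φ' q'), ?_, ?_, ?_, ?_⟩
  · have h1 := (lform_homog φ).pow (1 + (k - S.card))
    have h2 := IsHomogeneous.prod (S.erase q) (fun q' => lform (φ' q')) (fun _ => 1) (fun i _ => lform_homog _)
    have h3 := h1.mul h2
    convert h3 using 1
    have := Finset.card_pos.2 ⟨q, hq⟩
    simp [Finset.card_erase_of_mem hq]
    omega
  · rw [map_mul, map_pow, lform_eval, hφ1, one_pow, one_mul, map_prod]
    apply Finset.prod_eq_one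
    intro q' hq'
    rw [lform_eval, (hφ' q' (Finset.mem_erase.1 hq').1).1]
  · intro q' hq' hne
    rw [map_mul, map_prod, Finset.prod_eq_zero (Finset.mem_erase.2 ⟨hne, hq'⟩), mul_zero]
    rw [lform_eval, (hφ' q' hne).2]
  · intro w0 h0 w1 h1
    rw [map_mul, map_pow, pol_lform, hφ0 _ h0, hφ0 _ h1]
    simp

theorem step5 {K : Type} [Field K] {m d s t t' : ℕ} (P : PN K m d)
    (hP : P ∈ secantWrt (XSet K m d) s) (h : t + t' = d) (htt : t ≤ t')
    (S : Finset (Pm K m)) (l : Pm K m → K) (hl : ∀ q ∈ S, l q ≠ 0)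
    (W : Submodule K (Fin (m+1) → K)) (hS : ∀ q ∈ S, q.rep ∉ W)
    (w0 w1 : Fin (m+1) → K) (h0 : w0 ∈ W) (h1 : w1 ∈ W)
    (φ0 φ1 : Module.Dual K (Fin (m+1) → K)) (h00 : φ0 w0 = 1) (h01 : φ0 w1 = 0)
    (h10 : φ1 w0 = 0) (h11 : φ1 w1 = 1)
    (ψ : Polynomial K →ₗ[K] K) (g : Polynomial K) (hg : g.Monic)
    (hψ : ∀ f, (∀ h, ψ (f * h) = 0) ↔ g ∣ f) (hb : g.natDegree ≤ t + 1) (hSt : S.card ≤ t)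
    (hPr : ∀ F : Hd K m d, P.rep F = ψ (pol w0 w1 (F : PR K m)) + ∑ q ∈ S, l q * eval q.rep (F : PR K m)) :
    g.natDegree + S.card ≤ s := by
  classical
  by_contra hcon
  have hex : ∀ k, S.card ≤ k → g.natDegree ≤ k + 1 → ∃ F : Fin g.natDegree ⊕ S → Hd K m k,
      (∀ i : Fin g.natDegree, pol w0 w1 (F (Sum.inl i) : PR K m) = Polynomial.X ^ (i:ℕ)) ∧
      (∀ q : S, pol w0 w1 (F (Sum.inr q) : PR K m) = 0) ∧
      (∀ (i : Fin g.natDegree) (q : S), eval (q : Pm K m).rep (F (Sum.inl i) : PR K m) = 0) ∧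
      (∀ (q q' : S), eval (q : Pm K m).rep (F (Sum.inr q') : PR K m) = if q = q' then 1 else 0) := by
    intro k hk hk1
    choose G hG1 hG2 hG3 hG4 using fun q : S => sforms W S hS k hk q q.2
    let E : Fin g.natDegree → PR K m := fun i => lform φ0 ^ (k - (i:ℕ)) * lform φ1 ^ (i:ℕ)
    have hE : ∀ i, (E i).IsHomogeneous k := by
      intro i
      have := ((lform_homog φ0).pow (k - (i:ℕ))).mul ((lform_homog φ1).pow (i:ℕ))
      convert this using 1
      have := i.2
      omega
    have hEp : ∀ i, pol w0 w1 (E i) = Polynomial.X ^ (i:ℕ) := by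
      intro i
      simp only [E, map_mul, map_pow, pol_lform, h00, h01, h10, h11]
      simp
    have hGe : ∀ q q' : S, eval (q : Pm K m).rep (G q') = if q = q' then 1 else 0 := by
      intro q q'
      split_ifs with hqq
      · rw [hqq]; exact hG2 q'
      · exact hG3 q' q q.2 (fun h => hqq (Subtype.ext h))
    refine ⟨Sum.elim (fun i => ⟨E i, (mem_homogeneousSubmodule _ _).2 (hE i)⟩ -
      ∑ q : S, eval (q : Pm K m).rep (E i) • (⟨G q, (mem_homogeneousSubmodule _ _).2 (hG1 q)⟩ : Hd K m k))
      (fun q => ⟨G q, (mem_homogeneousSubmodule _ _).2 (hG1 q)⟩), ?_, ?_, ?_, ?_⟩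
    · intro i
      simp [hEp, hG4 _ w0 h0 w1 h1]
    · intro q
      simp [hG4 _ w0 h0 w1 h1]
    · intro i q
      simp [hGe, smul_eval]
    · intro q q'
      exact hGe q q'
  obtain ⟨F, hF1, hF2, hF3, hF4⟩ := hex t hSt hb
  obtain ⟨F', hF1', hF2', hF3', hF4'⟩ := hex t' (by omega) (by omega)
  have hdet := det_zero P hP h (ι := Fin g.natDegree ⊕ S) (by simp; omega) F F'
  have hM : (Matrix.of fun i j => P.rep (hmul h (F i) (F' j))) = Matrix.fromBlocks
      (Matrix.of fun i j : Fin g.natDegree => ψ (Polynomial.X ^ ((i:ℕ)+(j:ℕ)))) 0 0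
      (Matrix.diagonal fun q : S => l q) := by
    ext i j
    rw [Matrix.of_apply, hPr, ← Finset.sum_coe_sort]
    rcases i with i | i <;> rcases j with j | j
    · simp [hmul, hF1, hF1', hF3, pow_add]
    · simp [hmul, hF2', hF3]
    · simp [hmul, hF2, hF3']
    · simp only [hmul, map_mul, hF2, hF4, hF4']
      by_cases hij : i = j
      · subst hij; simp
      · simp [hij]
        intro h; exact absurd h.symm hij
  rw [hM, Matrix.det_fromBlocks_zero₂₁, Matrix.det_diagonal] at hdet
  rcases mul_eq_zero.1 hdet with h | h
  · exact xhankel ψ g hg hψ h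
  · rw [Finset.prod_eq_zero_iff] at h
    obtain ⟨q, _, hq⟩ := h
    exact hl q q.2 hq
end PartE2

section PartE
open MvPolynomial

theorem final {K : Type} [Field K] [IsAlgClosed K] [CharZero K]
    (m s d r : ℕ) (hs : 4 ≤ s) (hd : 2 * s + 2 ≤ d) (hr1 : d + 3 ≤ r + s) (hr2 : r + 2 ≤ d + s)
    (P : PN K m d) (hbr : brank d P = s) (hsr : srank d P = r) : (r + s) % 2 = d % 2 := by
  classical
  have hne : {s | 0 < s ∧ P ∈ secantWrt (XSet K m d) s}.Nonempty := by
    by_contra hne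
    rw [Set.not_nonempty_iff_eq_empty] at hne
    have : brank d P = 0 := by
      unfold brank brankWrt
      rw [hne]; exact Nat.sInf_empty
    omega
  have hP : P ∈ secantWrt (XSet K m d) s := by
    have := (Nat.sInf_mem hne).2
    rw [← hbr]; exact this
  have hmin : ∀ k, 1 ≤ k → P ∈ secantWrt (XSet K m d) k → s ≤ k := by
    intro k hk h
    rw [← hbr]; exact Nat.sInf_le ⟨hk, h⟩
  obtain ⟨B, l, hBr, hl, hB⟩ := srank_exists P hsr (by omega)
  obtain ⟨t, t', htd, htt, htt'⟩ : ∃ t t', t + t' = d ∧ t ≤ t' ∧ t' ≤ t + 1 :=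
    ⟨d / 2, d - d / 2, by omega, by omega, by omega⟩
  obtain ⟨p, hp, a, ha, hpa, hL, hSc⟩ := step1 P hP htd B l hl hB htt htt' hd (by omega) (by omega)
  set L := B.filter (fun x => x.rep ∈ ln p a) with hLdef
  set S := B.filter (fun x => x.rep ∉ ln p a) with hSdef
  have hLS : L.card + S.card = r := by
    rw [← hBr, hLdef, hSdef]; convert Finset.card_filter_add_card_filter_not (s := B) (fun x : Pm K m => x.rep ∈ ln p a)
  have hS : ∀ q ∈ S, q.rep ∉ ln p a := fun q hq => (Finset.mem_filter.1 hq).2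
  have huv : ∀ x : Pm K m, ∃ u v : K, x ∈ L → u • p.rep + v • a.rep = x.rep := by
    intro x
    by_cases hx : x ∈ L
    · obtain ⟨u, v, h⟩ := Submodule.mem_span_pair.1 (Finset.mem_filter.1 hx).2
      exact ⟨u, v, fun _ => h⟩
    · exact ⟨0, 0, fun h => absurd h hx⟩
  choose u v huv using huv
  obtain ⟨β, hμ, g0, hg0, hg0d, hg0f⟩ := xinf L u v l t t' htt' (by
    intro x hx
    by_contra h
    push Not at h
    have := huv x hx
    rw [h.1, h.2] at this
    simp at this
    exact x.rep_nonzero this.symm)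
  rw [htd] at hg0f
  set μ : Pm K m → K := fun x => v x - β * u x with hμdef
  set y : Pm K m → K := fun x => u x / μ x with hydef
  set w0 : Fin (m+1) → K := a.rep with hw0
  set w1 : Fin (m+1) → K := p.rep + β • a.rep with hw1
  have hw0m : w0 ∈ ln p a := ln_right p a
  have hw1m : w1 ∈ ln p a := Submodule.add_mem _ (ln_left p a) (Submodule.smul_mem _ _ (ln_right p a))
  have hrep : ∀ x ∈ L, x.rep = μ x • (w0 + y x • w1) := by
    intro x hx
    have h1 : μ x ≠ 0 := hμ x hx
    have h2 : μ x * y x = u x := by simp only [hydef]; field_simp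
    rw [← huv x hx, smul_add, smul_smul, h2, hw1, hw0, smul_add, smul_smul]
    simp only [hμdef, sub_smul]
    rw [mul_comm]; abel
  -- dual forms
  obtain ⟨α0, hα0, hα0'⟩ := exists_lform (Submodule.span K {a.rep}) p.rep (rep_notMem p a hpa)
  obtain ⟨α1, hα1, hα1'⟩ := exists_lform (Submodule.span K {p.rep}) a.rep (rep_notMem a p hpa.symm)
  have hα0a := hα0' _ (Submodule.mem_span_singleton_self _)
  have hα1p := hα1' _ (Submodule.mem_span_singleton_self _)
  have h00 : (α1 - β • α0) w0 = 1 := by simp [hw0, hα1, hα0a]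
  have h01 : (α1 - β • α0) w1 = 0 := by simp [hw1, hα1, hα0a, hα0, hα1p]
  have h10 : α0 w0 = 0 := by simp [hw0, hα0a]
  have h11 : α0 w1 = 1 := by simp [hw1, hα0a, hα0]
  have hw : ∀ z : K, w0 + z • w1 ≠ 0 := by
    intro z hz
    have := congrArg (α1 - β • α0) hz
    rw [map_add, map_smul, h00, h01] at this
    simp at this
  have hyinj : Set.InjOn y L := by
    intro x hx x' hx' hxx
    have h1 := hrep x hx
    have h2 := hrep x' hx'
    have hm1 := hμ x hx
    have hm2 := hμ x' hx'
    rw [hxx] at h1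
    by_contra hne
    apply rep_notMem x x' hne
    rw [Submodule.mem_span_singleton]
    refine ⟨μ x / μ x', ?_⟩
    rw [h1, h2, smul_smul, div_mul_cancel₀ _ hm2]
  -- functional
  let φ : Polynomial K →ₗ[K] K := ∑ x ∈ L, (l x * μ x ^ d) • Polynomial.leval (y x)
  have hφ : ∀ f, φ f = ∑ x ∈ L, (l x * μ x ^ d) * f.eval (y x) := by
    intro f
    simp [φ, LinearMap.sum_apply, Polynomial.leval]
  obtain ⟨ψ, g, hg, hgd, hψφ, hψ⟩ := xsylv φ d g0 hg0 (by
    intro f hf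
    rw [hφ]
    apply hg0f
    omega)
  rw [hg0d] at hgd
  have hPr : ∀ F : Hd K m d, P.rep F = ψ (pol w0 w1 (F : PR K m)) + ∑ q ∈ S, l q * eval q.rep (F : PR K m) := by
    intro F
    have hFh := (mem_homogeneousSubmodule _ _).1 F.2
    rw [hψφ _ (pol_natDegree _ _ _ hFh), hφ, hB, LinearMap.sum_apply]
    rw [← Finset.sum_filter_add_sum_filter_not B (fun x => x.rep ∈ ln p a)]
    congr 1
    · refine Finset.sum_congr rfl fun x hx => ?_
      have h1 := hrep x hx
      rw [LinearMap.smul_apply, nu_apply', h1, heval_smul _ hFh, pol_eval, smul_eq_mul]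
      ring
  have hg1 : ∀ f, ψ (g * f) = 0 := (hψ g).2 dvd_rfl
  have e3 := xcount L y (fun x => l x * μ x ^ d) hyinj (fun x hx => mul_ne_zero
    (hl x (Finset.mem_filter.1 hx).1) (pow_ne_zero _ (hμ x hx))) ψ g hg d
    (fun f hf => by rw [hψφ f hf, hφ]) hg1 (by omega)
  -- rank
  obtain ⟨Z, c, hZ, hZc⟩ := xrank ψ g hg hψ d (d + 2 - g.natDegree) (by omega) (by omega) (by omega)
  have e4 : r ≤ Z.card + S.card := by
    rw [← hsr, ← Finset.card_disjSum]
    apply srank_le' P (Z.disjSum S) (Sum.elim c l) (Sum.elim (fun z => w0 + z • w1) (fun q => q.rep))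
    · rintro (z | q) _
      · exact hw z
      · exact q.rep_nonzero
    · ext F
      have hFh := (mem_homogeneousSubmodule _ _).1 F.2
      rw [hPr, hZc _ (pol_natDegree _ _ _ hFh), Finset.sum_disjSum, LinearMap.add_apply,
        LinearMap.sum_apply, LinearMap.sum_apply]
      congr 1
      · refine Finset.sum_congr rfl fun z _ => ?_
        rw [pol_eval]
        simp only [Sum.elim_inl, LinearMap.smul_apply, nu_apply', smul_eq_mul]
        ring
  have e5 := step5 P hP htd htt S l (fun q hq => hl q (Finset.mem_filter.1 hq).1) (ln p a) hS w0 w1 hw0m hw1m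
    (α1 - β • α0) α0 h00 h01 h10 h11 ψ g hg hψ hgd hSc hPr
  have e6 := hmin (max 1 (g.natDegree + S.card)) (le_max_left _ _)
    (secant_mem P w0 w1 hw ψ g hg hg1 S l (fun q => q.rep) (fun q _ => q.rep_nonzero) hPr
      (le_max_right _ _) (le_max_left _ _))
  omega
end PartE


/-- Step (b) of the proof of the main theorem: emptiness of `σ_{s,r}(X_{m,d})` for
`d-s+3 ≤ r ≤ d+s-2` with `r + s ≡ d + 1 (mod 2)`. -/
theorem stmt15 (K : Type) [Field K] [IsAlgClosed K] [CharZero K]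
    (m s d : ℕ) (hm : 2 ≤ m) (hs : 4 ≤ s) (hd : 2 * s + 2 ≤ d) :
    ∀ r : ℕ, d + 3 ≤ r + s → r + 2 ≤ d + s → (r + s) % 2 = (d + 1) % 2 →
      sigmaSet K m d s r = ∅ := by
  intro r h1 h2 h3
  rw [Set.eq_empty_iff_forall_notMem]
  rintro P ⟨hb, hr⟩
  have := final m s d r hs hd h1 h2 P hb hr
  omega
end

section
/- Fix integers m ≥ 2, s ≥ 4 and d ≥ 2s+2. For every integer r with d+s−1 ≤ r ≤ 2d+1−s, one has σ_{s,r}(X_{m,d}) = ∅. -/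
open scoped LinearAlgebra.Projectivization

noncomputable section
open scoped Classical
open MvPolynomial

namespace Veq

variable {K : Type} [Field K] {m : ℕ}

theorem sep_W (W : Submodule K (Fin (m+1) → K)) (v : Fin (m+1) → K) (hv : v ∉ W) :
    ∃ l : PR K m, l.IsHomogeneous 1 ∧ (∀ w ∈ W, eval w l = 0) ∧ eval v l ≠ 0 := by
  obtain ⟨f, hf, hW⟩ := Submodule.exists_le_ker_of_notMem hv
  have key : ∀ w, eval w (∑ i, C (f (Pi.single i 1)) * X i : PR K m) = f w := by
    intro w
    simp only [map_sum, map_mul, eval_C, eval_X]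
    conv_rhs => rw [pi_eq_sum_univ' w]
    simp [mul_comm]
  refine ⟨∑ i, C (f (Pi.single i 1)) * X i, ?_, ?_, ?_⟩
  · exact IsHomogeneous.sum _ _ _ (fun i _ => isHomogeneous_C_mul_X _ _)
  · intro w hw; rw [key]; exact hW hw
  · rw [key]; exact hf

theorem rep_notMem {a b : Pm K m} (h : a ≠ b) : b.rep ∉ Submodule.span K {a.rep} := by
  intro hb
  rw [Submodule.mem_span_singleton] at hb
  obtain ⟨c, hc⟩ := hb
  apply h
  rw [← a.mk_rep, ← b.mk_rep, eq_comm, Projectivization.mk_eq_mk_iff']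
  exact ⟨c, hc⟩

theorem sep_pt {a b : Pm K m} (h : a ≠ b) :
    ∃ l : PR K m, l.IsHomogeneous 1 ∧ eval a.rep l = 0 ∧ eval b.rep l ≠ 0 := by
  obtain ⟨l, h1, h2, h3⟩ := sep_W _ _ (rep_notMem h)
  exact ⟨l, h1, h2 _ (Submodule.mem_span_singleton_self _), h3⟩

theorem nz_pow (b : Pm K m) (e : ℕ) : ∃ l : PR K m, l.IsHomogeneous e ∧ eval b.rep l ≠ 0 := by
  obtain ⟨l, h1, h2, h3⟩ := sep_W (⊥ : Submodule K (Fin (m+1) → K)) b.rep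
    (by simpa using b.rep_nonzero)
  refine ⟨l ^ e, by simpa using h1.pow e, ?_⟩
  rw [map_pow]; exact pow_ne_zero _ h3

theorem lagr (S : Finset (Pm K m)) (b : Pm K m) : ∀ (e : ℕ), b ∉ S → S.card ≤ e →
    ∃ f : PR K m, f.IsHomogeneous e ∧ (∀ a ∈ S, eval a.rep f = 0) ∧ eval b.rep f ≠ 0 := by
  induction S using Finset.induction_on with
  | empty =>
    intro e _ _
    obtain ⟨l, h1, h2⟩ := nz_pow b e
    exact ⟨l, h1, by simp, h2⟩
  | insert a S ha ih =>
    intro e hb he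
    rw [Finset.card_insert_of_notMem ha] at he
    simp only [Finset.mem_insert, not_or] at hb
    obtain ⟨e, rfl⟩ : ∃ e', e = e' + 1 := ⟨e - 1, by omega⟩
    obtain ⟨f, h1, h2, h3⟩ := ih e hb.2 (by omega)
    obtain ⟨l, l1, l2, l3⟩ := sep_pt (Ne.symm hb.1)
    refine ⟨f * l, h1.mul l1, ?_, ?_⟩
    · intro x hx
      rw [Finset.mem_insert] at hx
      rcases hx with rfl | hx
      · simp [l2]
      · simp [h2 x hx]
    · rw [map_mul]; exact mul_ne_zero h3 l3

/-- a linear relation in degree e -/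
def Rel (e : ℕ) (S : Finset (Pm K m)) (c : Pm K m → K) : Prop :=
  ∀ f : PR K m, f.IsHomogeneous e → ∑ b ∈ S, c b * eval b.rep f = 0

theorem Rel.indep {e : ℕ} {S : Finset (Pm K m)} {c : Pm K m → K} (h : Rel e S c)
    (hS : S.card ≤ e + 1) : ∀ b ∈ S, c b = 0 := by
  intro b hb
  obtain ⟨f, h1, h2, h3⟩ := lagr (S.erase b) b e (by simp)
    (by rw [Finset.card_erase_of_mem hb]; omega)
  have := h f h1
  rw [Finset.sum_eq_single_of_mem b hb] at this
  · exact (mul_eq_zero.mp this).resolve_right h3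
  · intro a ha hab
    rw [h2 a (by simp [ha, hab]), mul_zero]

theorem Rel.mul {e k : ℕ} {S : Finset (Pm K m)} {c : Pm K m → K} (h : Rel (e + k) S c)
    {g : PR K m} (hg : g.IsHomogeneous k) : Rel e S (fun b => c b * eval b.rep g) := by
  intro f hf
  rw [← h (f * g) (hf.mul hg)]
  refine Finset.sum_congr rfl fun b _ => ?_
  rw [map_mul]; ring

theorem Rel.sub {e : ℕ} {S T : Finset (Pm K m)} {c : Pm K m → K} (h : Rel e S c)
    (hT : T ⊆ S) (h0 : ∀ b ∈ S, b ∉ T → c b = 0) : Rel e T c := by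
  intro f hf
  rw [← h f hf]
  refine Finset.sum_subset hT fun b hb hbT => ?_
  rw [h0 b hb hbT, zero_mul]

/-- the line through two points -/
abbrev ln (a b : Pm K m) : Submodule K (Fin (m+1) → K) := Submodule.span K {a.rep, b.rep}

theorem line (e : ℕ) : ∀ (S : Finset (Pm K m)) (c : Pm K m → K), Rel e S c → S.Nonempty →
    (∀ b ∈ S, c b ≠ 0) → S.card ≤ 2 * e + 1 →
    ∃ a b : Pm K m, a ≠ b ∧ e + 2 ≤ (S.filter (fun p => p.rep ∈ ln a b)).card := by
  induction e with
  | zero =>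
    intro S c h hne hc hS
    obtain ⟨b, hb⟩ := hne
    exact absurd (h.indep (by omega) b hb) (hc b hb)
  | succ e ih =>
    intro S c h hne hc hS
    have hbig : e + 3 ≤ S.card := by
      by_contra hcon
      obtain ⟨b, hb⟩ := hne
      exact absurd (h.indep (by omega) b hb) (hc b hb)
    obtain ⟨a, ha, b, hb, hab⟩ := Finset.one_lt_card.mp (by omega : 1 < S.card)
    by_cases hall : ∀ p ∈ S, p.rep ∈ ln a b
    · refine ⟨a, b, hab, ?_⟩
      rw [Finset.filter_true_of_mem hall]; omega
    push Not at hall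
    obtain ⟨p, hp, hpW⟩ := hall
    obtain ⟨l, l1, l2, l3⟩ := sep_W _ _ hpW
    have hla : eval a.rep l = 0 := l2 _ (Submodule.subset_span (by simp))
    have hlb : eval b.rep l = 0 := l2 _ (Submodule.subset_span (by simp))
    obtain ⟨a', b', hab', hcard⟩ := ih (S.filter (fun p => eval p.rep l ≠ 0)) _
      ((h.mul l1).sub (Finset.filter_subset _ _) (by
        intro x hx hx'
        have : eval x.rep l = 0 := by simpa [hx] using hx'
        simp [this])) ⟨p, by simp [hp, l3]⟩ (by
        intro x hx
        rw [Finset.mem_filter] at hx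
        exact mul_ne_zero (hc x hx.1) hx.2) (by
        have : S.filter (fun p => eval p.rep l ≠ 0) ⊆ (S.erase a).erase b := by
          intro x hx
          rw [Finset.mem_filter] at hx
          simp only [Finset.mem_erase]
          refine ⟨?_, ?_, hx.1⟩
          · rintro rfl; exact hx.2 hlb
          · rintro rfl; exact hx.2 hla
        have := Finset.card_le_card this
        rw [Finset.card_erase_of_mem (by simp [hb, hab.symm]), Finset.card_erase_of_mem ha] at this
        omega)
    refine ⟨a', b', hab', ?_⟩
    by_cases hall : ∀ p ∈ S, p.rep ∈ ln a' b'
    · rw [Finset.filter_true_of_mem hall]; omega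
    exfalso
    push Not at hall
    obtain ⟨q, hq, hqW⟩ := hall
    obtain ⟨l', l1', l2', l3'⟩ := sep_W _ _ hqW
    have hrel : Rel e (S.filter (fun p => p.rep ∉ ln a' b')) (fun b => c b * eval b.rep l') :=
      (h.mul l1').sub (Finset.filter_subset _ _) (by
        intro x hx hx'
        have : x.rep ∈ ln a' b' := by simpa [hx] using hx'
        simp [l2' _ this])
    have hsplit := Finset.card_filter_add_card_filter_not (s := S) (fun p => p.rep ∈ ln a' b')
    have hle : ((S.filter (fun p => eval p.rep l ≠ 0)).filter (fun p => p.rep ∈ ln a' b')).card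
        ≤ (S.filter (fun p => p.rep ∈ ln a' b')).card :=
      Finset.card_le_card (Finset.filter_subset_filter _ (Finset.filter_subset _ _))
    have := hrel.indep (by omega) q (by simp [hq, hqW])
    exact (mul_ne_zero (hc q hq) l3') this

/-- existence of an independent set of 2t+1 points -/
theorem exT (t : ℕ) (B : Finset (Pm K m)) (hB : 2 * t + 1 ≤ B.card) :
    (∃ T ⊆ B, T.card = 2 * t + 1 ∧ ∀ c, Rel t T c → ∀ b ∈ T, c b = 0) ∨
    (∃ a b : Pm K m, a ≠ b ∧ (B.filter (fun p => p.rep ∉ ln a b)).card + 1 ≤ t) := by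
  by_contra hcon
  push Not at hcon
  obtain ⟨h1, h2⟩ := hcon
  obtain ⟨T, hTB, hT⟩ := Finset.exists_subset_card_eq hB
  obtain ⟨c, hrel, b, hb, hcb⟩ := h1 T hTB hT
  obtain ⟨a', b', hab', hcard⟩ := line t (T.filter (fun p => c p ≠ 0)) c
    (hrel.sub (Finset.filter_subset _ _) (by intro x hx hx'; simpa [hx] using hx'))
    ⟨b, by simp [hb, hcb]⟩ (by simp) (by
      have := Finset.card_filter_le T (fun p => c p ≠ 0)
      omega)
  have hle : ((T.filter (fun p => c p ≠ 0)).filter (fun p => p.rep ∈ ln a' b')).card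
        ≤ (B.filter (fun p => p.rep ∈ ln a' b')).card :=
      Finset.card_le_card (Finset.filter_subset_filter _ ((Finset.filter_subset _ _).trans hTB))
  obtain ⟨T1, hT1, hT1c⟩ := Finset.exists_subset_card_eq (by omega :
    t + 1 ≤ (B.filter (fun p => p.rep ∈ ln a' b')).card)
  obtain ⟨T2, hT2, hT2c⟩ := Finset.exists_subset_card_eq (by have := h2 a' b' hab'; omega :
    t ≤ (B.filter (fun p => p.rep ∉ ln a' b')).card)
  have g1 : ∀ x ∈ T1, x ∈ B ∧ x.rep ∈ ln a' b' := fun x hx => by simpa using hT1 hx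
  have g2 : ∀ x ∈ T2, x ∈ B ∧ x.rep ∉ ln a' b' := fun x hx => by simpa using hT2 hx
  have hdisj : Disjoint T1 T2 := by
    rw [Finset.disjoint_left]; intro x hx hx'; exact (g2 x hx').2 (g1 x hx).2
  obtain ⟨c, hrel, b, hb, hcb⟩ := h1 (T1 ∪ T2) (by
    intro x hx
    rcases Finset.mem_union.mp hx with hx | hx
    · exact (g1 x hx).1
    · exact (g2 x hx).1) (by rw [Finset.card_union_of_disjoint hdisj]; omega)
  have hz2 : ∀ x ∈ T2, c x = 0 := by
    intro x hx
    obtain ⟨l, l1, l2, l3⟩ := sep_W _ _ (g2 x hx).2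
    obtain ⟨t, rfl⟩ : ∃ t', t = t' + 1 := ⟨t - 1, by
      have := Finset.card_pos.mpr ⟨x, hx⟩; omega⟩
    have hr : Rel t T2 (fun b => c b * eval b.rep l) :=
      (hrel.mul l1).sub Finset.subset_union_right (by
        intro y hy hy'
        have : y ∈ T1 := by
          rcases Finset.mem_union.mp hy with h | h
          · exact h
          · exact absurd h hy'
        simp [l2 _ (g1 y this).2])
    exact (mul_eq_zero.mp (hr.indep (by omega) x hx)).resolve_right l3
  have hz1 : ∀ x ∈ T1, c x = 0 := by
    have hr : Rel t T1 c := hrel.sub Finset.subset_union_left (by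
        intro y hy hy'
        rcases Finset.mem_union.mp hy with h | h
        · exact absurd h hy'
        · exact hz2 y h)
    exact hr.indep (by omega)
  rcases Finset.mem_union.mp hb with h | h
  · exact hcb (hz1 b h)
  · exact hcb (hz2 b h)

/-- dual forms -/
theorem dualForms (t : ℕ) (T : Finset (Pm K m)) (hT : ∀ c, Rel t T c → ∀ b ∈ T, c b = 0)
    (b : Pm K m) (hb : b ∈ T) :
    ∃ f : PR K m, f.IsHomogeneous t ∧ (∀ a ∈ T, a ≠ b → eval a.rep f = 0) ∧ eval b.rep f ≠ 0 := by
  let ev : Hd K m t →ₗ[K] (T → K) :=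
    LinearMap.pi (fun a => (aeval a.1.rep).toLinearMap ∘ₗ (Hd K m t).subtype)
  have hev : ∀ f a, ev f a = eval a.1.rep (f : PR K m) := fun f a => by
    simp [ev, aeval_eq_eval]
  have hsurj : LinearMap.range ev = ⊤ := by
    by_contra hne
    obtain ⟨φ, hφ, hle⟩ := Submodule.exists_le_ker_of_lt_top _ (lt_top_iff_ne_top.mpr hne)
    apply hφ
    have := hT (fun a => if h : a ∈ T then φ (Pi.single ⟨a, h⟩ 1) else 0) (by
      intro f hf
      have h1 : φ (ev ⟨f, hf⟩) = 0 := hle ⟨_, rfl⟩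
      rw [pi_eq_sum_univ' (ev ⟨f, hf⟩), map_sum] at h1
      rw [← Finset.sum_coe_sort, ← h1]
      refine Finset.sum_congr rfl fun a _ => ?_
      have : φ (ev ⟨f, hf⟩ a • Pi.single a 1) = ev ⟨f, hf⟩ a * φ (Pi.single a 1) := by
        rw [map_smul, smul_eq_mul]
      simp only [Finset.coe_mem, dite_true]
      rw [this, hev, mul_comm])
    apply LinearMap.pi_ext'
    intro a
    ext
    have h2 := this a.1 a.2
    simpa using h2
  obtain ⟨f, hf⟩ := LinearMap.range_eq_top.mp hsurj (Pi.single ⟨b, hb⟩ 1)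
  refine ⟨f, f.2, ?_, ?_⟩
  · intro a ha hab
    rw [← hev f ⟨a, ha⟩, hf, Pi.single_eq_of_ne]
    simpa using hab
  · rw [← hev f ⟨b, hb⟩, hf]; simp

/-- catalecticant rank at most s -/
def Cat (d s : ℕ) (B : Finset (Pm K m)) (c : Pm K m → K) : Prop :=
  ∀ u ≤ d, ∀ T : Finset (Pm K m), s < T.card → ∀ f : Pm K m → PR K m,
    (∀ b ∈ T, (f b).IsHomogeneous u) → ∃ a : Pm K m → K, (∃ b ∈ T, a b ≠ 0) ∧
      Rel (d - u) B (fun b => c b * ∑ k ∈ T, a k * eval b.rep (f k))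

theorem geo1 (d s : ℕ) (hs : 4 ≤ s) (hd : 2 * s + 2 ≤ d) (B : Finset (Pm K m)) (c : Pm K m → K)
    (hc : ∀ b ∈ B, c b ≠ 0) (hcat : Cat d s B c) (h1 : d + s ≤ B.card + 1)
    (h2 : B.card + s ≤ 2 * d + 1) :
    ∃ a b : Pm K m, a ≠ b ∧ ∃ t, 2 * t ≤ s + 1 ∧
      d + 2 ≤ (B.filter (fun p => p.rep ∈ ln a b)).card + t := by
  obtain ⟨t, ht1, ht2⟩ : ∃ t, s ≤ 2 * t ∧ 2 * t ≤ s + 1 := ⟨(s + 1) / 2, by omega, by omega⟩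
  rcases exT t B (by omega) with ⟨T, hTB, hT, hind⟩ | ⟨a, b, hab, hcard⟩
  swap
  · have hsplit := Finset.card_filter_add_card_filter_not (s := B) (fun p => p.rep ∈ ln a b)
    exact ⟨a, b, hab, t, ht2, by omega⟩
  choose! f hf1 hf2 hf3 using dualForms t T hind
  obtain ⟨T', hT'T, hT'⟩ := Finset.exists_subset_card_eq (by omega : s + 1 ≤ T.card)
  obtain ⟨a, ⟨b, hb, hab⟩, hrel⟩ := hcat t (by omega) T' (by omega) f
    (fun b hb => hf1 b (hT'T hb))
  set g : Pm K m → K := fun b => ∑ k ∈ T', a k * eval b.rep (f k) with hg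
  have hg0 : ∀ x ∈ T, x ∉ T' → g x = 0 := by
    intro x hx hx'
    refine Finset.sum_eq_zero fun k hk => ?_
    rw [hf2 k (hT'T hk) x hx (by rintro rfl; exact hx' hk), mul_zero]
  have hgb : g b ≠ 0 := by
    have : g b = a b * eval b.rep (f b) := by
      refine Finset.sum_eq_single_of_mem b hb fun k hk hkb => ?_
      rw [hf2 k (hT'T hk) b (hT'T hb) hkb.symm, mul_zero]
    rw [this]; exact mul_ne_zero hab (hf3 b (hT'T hb))
  obtain ⟨p, q, hpq, hcard⟩ := line (d - t) (B.filter (fun b => g b ≠ 0)) (fun b => c b * g b)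
    (hrel.sub (Finset.filter_subset _ _) (by
      intro x hx hx'
      have : g x = 0 := by simpa [hx] using hx'
      show c x * g x = 0
      rw [this, mul_zero])) ⟨b, by simp [hTB (hT'T hb), hgb]⟩ (by
      intro x hx
      rw [Finset.mem_filter] at hx
      exact mul_ne_zero (hc x hx.1) hx.2) (by
      have hsub : B.filter (fun b => g b ≠ 0) ⊆ B \ (T \ T') := by
        intro x hx
        rw [Finset.mem_filter] at hx
        rw [Finset.mem_sdiff, Finset.mem_sdiff]
        exact ⟨hx.1, fun h => hx.2 (hg0 x h.1 h.2)⟩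
      have := Finset.card_le_card hsub
      rw [Finset.card_sdiff_of_subset (Finset.sdiff_subset.trans hTB),
        Finset.card_sdiff_of_subset hT'T] at this
      omega)
  refine ⟨p, q, hpq, t, ht2, ?_⟩
  have hle : ((B.filter (fun b => g b ≠ 0)).filter (fun x => x.rep ∈ ln p q)).card
        ≤ (B.filter (fun x => x.rep ∈ ln p q)).card :=
      Finset.card_le_card (Finset.filter_subset_filter _ (Finset.filter_subset _ _))
  omega

theorem geo2 (d s : ℕ) (hs : 4 ≤ s) (hd : 2 * s + 2 ≤ d) (B : Finset (Pm K m)) (c : Pm K m → K)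
    (hc : ∀ b ∈ B, c b ≠ 0) (hcat : Cat d s B c) (h1 : d + s ≤ B.card + 1)
    (h2 : B.card + s ≤ 2 * d + 1) :
    ∃ a b : Pm K m, a ≠ b ∧ d + 1 ≤ (B.filter (fun p => p.rep ∈ ln a b)).card := by
  obtain ⟨p, q, hpq, t, ht, hcard⟩ := geo1 d s hs hd B c hc hcat h1 h2
  refine ⟨p, q, hpq, ?_⟩
  by_contra hcon
  set W := ln p q with hW
  set BL := B.filter (fun x => x.rep ∈ W) with hBL
  set B2 := B.filter (fun x => x.rep ∉ W) with hB2
  have hsplit : BL.card + B2.card = B.card :=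
    Finset.card_filter_add_card_filter_not (s := B) (fun x => x.rep ∈ W)
  obtain ⟨j, hj⟩ : ∃ j, BL.card + j = d := ⟨d - BL.card, by omega⟩
  obtain ⟨u, hu⟩ : ∃ u, u + 1 + j = s := ⟨s - 1 - j, by omega⟩
  have mL : ∀ x ∈ BL, x ∈ B ∧ x.rep ∈ W := fun x hx => by simpa [hBL] using hx
  have m2 : ∀ x ∈ B2, x ∈ B ∧ x.rep ∉ W := fun x hx => by simpa [hB2] using hx
  obtain ⟨G, hG, hGc⟩ := Finset.exists_subset_card_eq (by omega : u - j - 1 ≤ BL.card)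
  have hBLG : (BL \ G).card = BL.card - (u - j - 1) := by
    rw [Finset.card_sdiff_of_subset hG, hGc]
  obtain ⟨T1, hT1, hT1c⟩ := Finset.exists_subset_card_eq (by omega : j + 2 ≤ (BL \ G).card)
  obtain ⟨T2, hT2, hT2c⟩ := Finset.exists_subset_card_eq (by omega : u ≤ B2.card)
  have n1 : ∀ x ∈ T1, x ∈ BL ∧ x ∉ G := fun x hx => Finset.mem_sdiff.mp (hT1 hx)
  have hdisj : Disjoint T1 T2 := by
    rw [Finset.disjoint_left]; intro x hx hx'
    exact (m2 x (hT2 hx')).2 (mL x (n1 x hx).1).2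
  have hf : ∀ k ∈ T1 ∪ T2, ∃ f : PR K m, f.IsHomogeneous u ∧ eval k.rep f ≠ 0 ∧
      (∀ x ∈ T1, x ≠ k → eval x.rep f = 0) ∧ (∀ x ∈ G, eval x.rep f = 0) ∧
      (k ∈ T2 → (∀ x ∈ T2, x ≠ k → eval x.rep f = 0) ∧ ∀ x ∈ BL, eval x.rep f = 0) := by
    intro k hk
    by_cases hk2 : k ∈ T2
    · obtain ⟨l, l1, l2, l3⟩ := sep_W _ _ (m2 k (hT2 hk2)).2
      obtain ⟨f, f1, f2, f3⟩ := lagr (T2.erase k) k (u - 1) (by simp)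
        (by rw [Finset.card_erase_of_mem hk2]; omega)
      have hz : ∀ x ∈ BL, eval x.rep (f * l) = 0 := fun x hx => by
        rw [map_mul, l2 _ (mL x hx).2, mul_zero]
      refine ⟨f * l, ?_, ?_, fun x hx _ => hz x (n1 x hx).1, fun x hx => hz x (hG hx),
        fun _ => ⟨?_, hz⟩⟩
      · have := f1.mul l1
        rwa [show u - 1 + 1 = u by omega] at this
      · rw [map_mul]; exact mul_ne_zero f3 l3
      · intro x hx hxk
        rw [map_mul, f2 x (by simp [hx, hxk]), zero_mul]
    · have hk1 : k ∈ T1 := (Finset.mem_union.mp hk).resolve_right hk2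
      obtain ⟨f, f1, f2, f3⟩ := lagr (T1.erase k ∪ G) k u (by simp [(n1 k hk1).2]) (by
        have := Finset.card_union_le (T1.erase k) G
        rw [Finset.card_erase_of_mem hk1] at this
        omega)
      exact ⟨f, f1, f3, fun x hx hxk => f2 x (by simp [hx, hxk]), fun x hx => f2 x (by simp [hx]),
        fun h => absurd h hk2⟩
  choose! f f1 f2 f3 f4 f5 using hf
  obtain ⟨a, ⟨k, hk, hak⟩, hrel⟩ := hcat u (by omega) (T1 ∪ T2)
    (by rw [Finset.card_union_of_disjoint hdisj]; omega) f f1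
  set g : Pm K m → K := fun b => ∑ k ∈ T1 ∪ T2, a k * eval b.rep (f k) with hg
  have hg2 : ∀ x ∈ B2, g x = 0 := by
    intro x hx
    obtain ⟨l, l1, l2, l3⟩ := sep_W _ _ (m2 x hx).2
    have hrel' : Rel (d - u - 1 + 1) B (fun b => c b * g b) := by
      rwa [show d - u - 1 + 1 = d - u by omega]
    have hr : Rel (d - u - 1) B2 (fun b => c b * g b * eval b.rep l) :=
      (hrel'.mul l1).sub (Finset.filter_subset _ _) (by
        intro y hy hy'
        have : y.rep ∈ W := by simpa [hB2, hy] using hy'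
        show c y * g y * _ = 0
        rw [l2 _ this, mul_zero])
    have h0 := hr.indep (by omega) x hx
    exact (mul_eq_zero.mp ((mul_eq_zero.mp h0).resolve_right l3)).resolve_left (hc x (m2 x hx).1)
  have hgG : ∀ x ∈ G, g x = 0 := fun x hx =>
    Finset.sum_eq_zero fun k hk => by rw [f4 k hk x hx, mul_zero]
  have hg1 : ∀ x ∈ BL \ G, g x = 0 := by
    have hr : Rel (d - u) (BL \ G) (fun b => c b * g b) := by
      refine hrel.sub (Finset.sdiff_subset.trans (Finset.filter_subset _ _)) ?_
      intro y hy hy'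
      show c y * g y = 0
      by_cases hyW : y.rep ∈ W
      · have hyL : y ∈ BL := by simp [hBL, hy, hyW]
        rw [hgG y (by by_contra h; exact hy' (Finset.mem_sdiff.mpr ⟨hyL, h⟩)), mul_zero]
      · rw [hg2 y (by simp [hB2, hy, hyW]), mul_zero]
    intro x hx
    exact (mul_eq_zero.mp (hr.indep (by omega) x hx)).resolve_left
      (hc x (mL x (Finset.mem_sdiff.mp hx).1).1)
  have ha1 : ∀ x ∈ T1, a x = 0 := by
    intro x hx
    have h0 : g x = a x * eval x.rep (f x) := by
      refine Finset.sum_eq_single_of_mem x (Finset.mem_union_left _ hx) fun k hk hkx => ?_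
      rw [f3 k hk x hx hkx.symm, mul_zero]
    rw [hg1 x (hT1 hx)] at h0
    exact (mul_eq_zero.mp h0.symm).resolve_right (f2 x (Finset.mem_union_left _ hx))
  have ha2 : ∀ x ∈ T2, a x = 0 := by
    intro x hx
    have h0 : g x = a x * eval x.rep (f x) := by
      refine Finset.sum_eq_single_of_mem x (Finset.mem_union_right _ hx) fun k hk hkx => ?_
      rcases Finset.mem_union.mp hk with hk1 | hk2
      · rw [ha1 k hk1, zero_mul]
      · rw [(f5 k hk hk2).1 x hx hkx.symm, mul_zero]
    rw [hg2 x (hT2 hx)] at h0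
    exact (mul_eq_zero.mp h0.symm).resolve_right (f2 x (Finset.mem_union_right _ hx))
  rcases Finset.mem_union.mp hk with h | h
  · exact hak (ha1 k h)
  · exact hak (ha2 k h)

theorem nu_apply (d : ℕ) (v : Fin (m+1) → K) (f : Hd K m d) :
    nu d v f = eval v (f : PR K m) := by
  simp [nu, aeval_eq_eval]

/-- multiplication by a form of degree u -/
def mulL (d u : ℕ) (hu : u ≤ d) (f : PR K m) (hf : f.IsHomogeneous u) :
    Hd K m (d - u) →ₗ[K] Hd K m d :=
  ((LinearMap.mulLeft K f) ∘ₗ (Hd K m (d - u)).subtype).codRestrict _ (by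
    intro g
    have := hf.mul g.2
    rw [show u + (d - u) = d by omega] at this
    exact this)

theorem mulL_coe (d u : ℕ) (hu : u ≤ d) (f : PR K m) (hf : f.IsHomogeneous u)
    (g : Hd K m (d - u)) : ((mulL d u hu f hf g : Hd K m d) : PR K m) = f * g := rfl

theorem det_poly {ι V : Type} [Fintype ι] [AddCommGroup V] [Module K V]
    (x : ι → ι → V) :
    (fun ψ : Module.Dual K V => Matrix.det (Matrix.of fun i j => ψ (x i j))) ∈
      polyFunctions K (Module.Dual K V) := by
  have : (fun ψ : Module.Dual K V => Matrix.det (Matrix.of fun i j => ψ (x i j))) =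
      ∑ σ : Equiv.Perm ι, ((Equiv.Perm.sign σ : ℤ) : K) •
        ∏ i, (fun ψ : Module.Dual K V => ψ (x (σ i) i)) := by
    funext ψ
    rw [Matrix.det_apply']
    simp [Finset.sum_apply, Finset.prod_apply]
  rw [this]
  refine Subalgebra.sum_mem _ fun σ _ => Subalgebra.smul_mem _ (Subalgebra.prod_mem _ fun i _ => ?_) _
  exact Algebra.subset_adjoin ⟨Module.Dual.eval K V (x (σ i) i), rfl⟩

theorem cat_aux (d s u : ℕ) (hu : u ≤ d) (P : PN K m d) (hP : P ∈ secantWrt (XSet K m d) s)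
    {ι : Type} [Fintype ι] (hι : s < Fintype.card ι) (f : ι → PR K m)
    (hf : ∀ i, (f i).IsHomogeneous u) :
    ∃ a : ι → K, a ≠ 0 ∧ ∀ g : Hd K m (d - u),
      ∑ i, a i * P.rep (mulL d u hu (f i) (hf i) g) = 0 := by
  by_contra hcon
  push Not at hcon
  let ev : Hd K m (d - u) →ₗ[K] (ι → K) :=
    LinearMap.pi (fun i => P.rep ∘ₗ mulL d u hu (f i) (hf i))
  have hsurj : LinearMap.range ev = ⊤ := by
    by_contra hne
    obtain ⟨φ, hφ, hle⟩ := Submodule.exists_le_ker_of_lt_top _ (lt_top_iff_ne_top.mpr hne)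
    obtain ⟨g, hg⟩ := hcon (fun i => φ (Pi.single i 1)) (by
      intro h0
      apply hφ
      apply LinearMap.pi_ext'
      intro a
      ext
      simpa using congrFun h0 a)
    apply hg
    have h1 : φ (ev g) = 0 := hle ⟨_, rfl⟩
    rw [pi_eq_sum_univ' (ev g), map_sum] at h1
    rw [← h1]
    refine Finset.sum_congr rfl fun i _ => ?_
    have : φ (ev g i • Pi.single i 1) = ev g i * φ (Pi.single i 1) := by
      rw [map_smul, smul_eq_mul]
    rw [this, mul_comm]; rfl
  choose g hg using fun j => LinearMap.range_eq_top.mp hsurj (Pi.single j 1)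
  have hPF := hP _ (det_poly (fun i j => mulL d u hu (f i) (hf i) (g j))) (by
    rintro Q ⟨S, hSX, hS, hQ⟩ c
    choose! pt hpt using fun q (hq : q ∈ S) => hSX hq
    rw [← Matrix.exists_vecMul_eq_zero_iff]
    -- nontrivial combination vanishing at all the points
    let A : (ι → K) →ₗ[K] (S → K) :=
      LinearMap.pi fun q => ∑ i, (eval (pt q.1).rep (f i)) • LinearMap.proj i
    have hA : LinearMap.ker A ≠ ⊥ := by
      apply LinearMap.ker_ne_bot_of_finrank_lt
      simp
      omega
    obtain ⟨a, ha, ha0⟩ := Submodule.exists_mem_ne_zero_of_ne_bot hA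
    refine ⟨a, ha0, ?_⟩
    have hz : ∀ q ∈ S, ∑ i, a i * eval (pt q).rep (f i) = 0 := by
      intro q hq
      have := congrFun (LinearMap.mem_ker.mp ha) ⟨q, hq⟩
      simpa [A, mul_comm] using this
    have hQ0 : ∀ ψ ∈ Submodule.span K (Projectivization.rep '' (S : Set (PN K m d))),
        ∀ j, ∑ i, a i * ψ (mulL d u hu (f i) (hf i) (g j)) = 0 := by
      intro ψ hψ j
      induction hψ using Submodule.span_induction with
      | mem x hx =>
        obtain ⟨q, hq, rfl⟩ := hx
        have hqr : q.rep ∈ Submodule.span K {nu d (pt q).rep} := by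
          rw [← hpt q hq, Projectivization.submodule_eq]
          exact Submodule.mem_span_singleton_self _
        obtain ⟨e, he⟩ := Submodule.mem_span_singleton.mp hqr
        rw [← he]
        have : ∑ i, a i * (e • nu d (pt q).rep) (mulL d u hu (f i) (hf i) (g j)) =
            (∑ i, a i * eval (pt q).rep (f i)) * (e * eval (pt q).rep (g j : PR K m)) := by
          rw [Finset.sum_mul]
          refine Finset.sum_congr rfl fun i _ => ?_
          rw [LinearMap.smul_apply, nu_apply, mulL_coe, map_mul, smul_eq_mul]
          ring
        rw [this, hz q hq, zero_mul]
      | zero => simp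
      | add x y _ _ hx hy =>
        simp only [LinearMap.add_apply, mul_add, Finset.sum_add_distrib, hx, hy, add_zero]
      | smul e x _ hx =>
        have : ∑ i, a i * (e • x) (mulL d u hu (f i) (hf i) (g j)) =
            e * ∑ i, a i * x (mulL d u hu (f i) (hf i) (g j)) := by
          rw [Finset.mul_sum]
          refine Finset.sum_congr rfl fun i _ => ?_
          rw [LinearMap.smul_apply, smul_eq_mul]; ring
        rw [this, hx, mul_zero]
    funext j
    exact hQ0 (c • Q.rep) (Submodule.smul_mem _ _ hQ) j) 1
  have hone : (Matrix.of fun i j => ((1 : K) • P.rep) (mulL d u hu (f i) (hf i) (g j))) = 1 := by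
    ext i j
    have := congrFun (hg j) i
    rw [Matrix.of_apply, one_smul, Matrix.one_apply]
    have h2 : P.rep (mulL d u hu (f i) (hf i) (g j)) = (Pi.single j 1 : ι → K) i := this
    rw [h2, Pi.single_apply]
  simp only [hone, Matrix.det_one] at hPF
  exact one_ne_zero hPF

theorem cat (d s : ℕ) (P : PN K m d) (hP : P ∈ secantWrt (XSet K m d) s)
    (B : Finset (Pm K m)) (c : Pm K m → K) (hPB : P.rep = ∑ b ∈ B, c b • nu d b.rep) :
    Cat d s B c := by
  intro u hu T hT f hf
  obtain ⟨a, ha0, ha⟩ := cat_aux d s u hu P hP (ι := T) (by simpa using hT) (fun i => f i.1)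
    (fun i => hf i.1 i.2)
  refine ⟨fun b => if h : b ∈ T then a ⟨b, h⟩ else 0, ?_, ?_⟩
  · by_contra hcon
    push Not at hcon
    apply ha0
    funext i
    simpa using hcon i.1 i.2
  · intro g hg
    have h1 := ha ⟨g, hg⟩
    have h2 : ∀ b : Pm K m, ∑ k ∈ T, (if h : k ∈ T then a ⟨k, h⟩ else 0) * eval b.rep (f k) =
        ∑ i : T, a i * eval b.rep (f i.1) := by
      intro b
      rw [← Finset.sum_coe_sort]
      refine Finset.sum_congr rfl fun i _ => ?_
      simp
    simp only [h2]
    rw [← h1, hPB]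
    simp only [LinearMap.sum_apply, LinearMap.smul_apply, nu_apply, mulL_coe, map_mul, smul_eq_mul]
    simp only [Finset.mul_sum, Finset.sum_mul]
    rw [Finset.sum_comm]
    refine Finset.sum_congr rfl fun i _ => Finset.sum_congr rfl fun b _ => ?_
    ring

theorem nu_smul (d : ℕ) (c : K) (v : Fin (m+1) → K) : nu d (c • v) = c ^ d • nu d v := by
  ext f
  rw [nu_apply, LinearMap.smul_apply, nu_apply, smul_eq_mul]
  have h := f.2
  rw [mem_homogeneousSubmodule] at h
  rw [eval_eq, eval_eq, Finset.mul_sum]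
  refine Finset.sum_congr rfl fun e he => ?_
  have hdeg := h.degree_eq_sum_deg_support he
  simp only [Pi.smul_apply, smul_eq_mul, mul_pow, Finset.prod_mul_distrib]
  rw [Finset.prod_pow_eq_pow_sum]
  rw [← hdeg]; ring

theorem nu_ne_zero (d : ℕ) (b : Pm K m) : nu d b.rep ≠ 0 := by
  obtain ⟨l, h1, h2⟩ := nz_pow b d
  intro h
  apply h2
  have := nu_apply d b.rep ⟨l, h1⟩
  rw [h] at this
  simpa using this.symm

theorem rank_le (d : ℕ) (P : PN K m d) (B : Finset (Pm K m))
    (h : P.rep ∈ dualSpan d (B : Set (Pm K m))) : srank d P ≤ B.card := by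
  let F : Pm K m → PN K m d := fun b => Projectivization.mk K (nu d b.rep) (nu_ne_zero d b)
  refine le_trans (Nat.sInf_le (m := (B.image F).card) ⟨B.image F, ?_, rfl, ?_⟩)
    Finset.card_image_le
  · intro Q hQ
    obtain ⟨b, _, rfl⟩ := Finset.mem_image.mp (Finset.mem_coe.mp hQ)
    exact ⟨b, Projectivization.submodule_mk _ _⟩
  · refine (Submodule.span_le.mpr ?_ : dualSpan d (B : Set (Pm K m)) ≤ _) h
    rintro _ ⟨b, hb, rfl⟩
    obtain ⟨a, ha⟩ := Projectivization.exists_smul_eq_mk_rep K (nu d b.rep) (nu_ne_zero d b)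
    have : nu d b.rep = (a⁻¹ : Kˣ) • (F b).rep := by
      rw [← ha, inv_smul_smul]
    show nu d b.rep ∈ _
    rw [this]
    refine Submodule.smul_mem _ ((a⁻¹ : Kˣ) : K) (Submodule.subset_span ⟨F b, ?_, rfl⟩)
    simp only [Finset.coe_image]
    exact ⟨b, hb, rfl⟩

theorem rank_ex (d r : ℕ) (hr : 0 < r) (P : PN K m d) (h : srank d P = r) :
    ∃ B : Finset (Pm K m), B.card ≤ r ∧ P.rep ∈ dualSpan d (B : Set (Pm K m)) := by
  have hne := Nat.nonempty_of_pos_sInf (s := {r | ∃ S : Finset (PN K m d), ↑S ⊆ XSet K m d ∧ S.card = r ∧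
    P.rep ∈ Submodule.span K (Projectivization.rep '' (S : Set (PN K m d)))}) (by
      have : 0 < srank d P := by omega
      exact this)
  have hmem := Nat.sInf_mem hne
  obtain ⟨S, hSX, hS, hP⟩ := hmem
  choose! pt hpt using fun q (hq : q ∈ S) => hSX hq
  refine ⟨S.image pt, ?_, ?_⟩
  · refine Finset.card_image_le.trans ?_
    rw [hS]; exact le_of_eq h
  · refine (Submodule.span_le.mpr ?_ : _ ≤ dualSpan d _) hP
    rintro _ ⟨q, hq, rfl⟩
    have hqr : q.rep ∈ Submodule.span K {nu d (pt q).rep} := by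
      rw [← hpt q hq, Projectivization.submodule_eq]
      exact Submodule.mem_span_singleton_self _
    refine Submodule.span_mono ?_ hqr
    rintro _ rfl
    exact ⟨pt q, by simpa using ⟨q, hq, rfl⟩, rfl⟩

theorem hom2 (d : ℕ) (f : PR K m) (hf : f.IsHomogeneous d) (v w : Fin (m+1) → K) :
    ∃ a : ℕ → K, ∀ β γ : K, eval (β • v + γ • w) f =
      ∑ i ∈ Finset.range (d + 1), a i * (β ^ i * γ ^ (d - i)) := by
  let p : MvPolynomial (Fin 2) K :=
    aeval (fun i => C (v i) * X 0 + C (w i) * X 1 : Fin (m+1) → MvPolynomial (Fin 2) K) f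
  have hp : p.IsHomogeneous d := by
    have := hf.aeval (fun i => C (v i) * X 0 + C (w i) * X 1 : Fin (m+1) → MvPolynomial (Fin 2) K)
      (n := 1) (fun i => (isHomogeneous_C_mul_X _ _).add (isHomogeneous_C_mul_X _ _))
    rwa [one_mul] at this
  have hev : ∀ β γ : K, eval (β • v + γ • w) f = eval ![β, γ] p := by
    intro β γ
    have : (eval ![β, γ]).comp (aeval (fun i => C (v i) * X 0 + C (w i) * X 1 :
        Fin (m+1) → MvPolynomial (Fin 2) K) : PR K m →ₐ[K] MvPolynomial (Fin 2) K).toRingHom =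
        eval (β • v + γ • w) := by
      apply MvPolynomial.ringHom_ext
      · intro r; simp
      · intro i; simp [mul_comm]
    rw [← this]; rfl
  have hdeg : ∀ e ∈ p.support, e 0 + e 1 = d := by
    intro e he
    have h1 := hp (mem_support_iff.mp he)
    have h2 : e.degree = d := by
      rw [Finsupp.degree_eq_weight_one (R := ℕ)]; exact h1
    rw [← h2, Finsupp.degree_eq_sum, Fin.sum_univ_two]
  refine ⟨fun i => ∑ e ∈ p.support with e 0 = i, coeff e p, fun β γ => ?_⟩
  rw [hev, eval_eq', ← Finset.sum_fiberwise_of_maps_to (s := p.support) (t := Finset.range (d + 1))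
    (g := fun e => e 0)]
  · refine Finset.sum_congr rfl fun i _ => ?_
    rw [Finset.sum_mul]
    refine Finset.sum_congr rfl fun e he => ?_
    rw [Finset.mem_filter] at he
    have h3 := hdeg e he.1
    rw [Fin.prod_univ_two, ← he.2, show d - e 0 = e 1 by omega]
    simp
  · intro e he
    have h3 := hdeg e he
    rw [Finset.mem_range]; omega

theorem roots_ex [IsAlgClosed K] [CharZero K] (d : ℕ) (hd : 1 ≤ d) (c : K) (hc : c ≠ 0) :
    ∃ α : Fin d → K, Function.Injective α ∧ ∀ i, α i ^ d = c := by
  let p : Polynomial K := Polynomial.X ^ d - Polynomial.C c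
  have hsep : p.Separable := Polynomial.separable_X_pow_sub_C c (by
    exact_mod_cast (by omega : d ≠ 0)) hc
  have hnd := Polynomial.nodup_roots hsep
  have hcard : p.roots.card = d := by
    rw [IsAlgClosed.card_roots_eq_natDegree]
    exact Polynomial.natDegree_X_pow_sub_C
  have hcard' : p.roots.toFinset.card = d := by
    rw [Multiset.toFinset_card_of_nodup hnd, hcard]
  let e := (p.roots.toFinset.equivFinOfCardEq hcard').symm
  refine ⟨fun i => (e i).1, fun i j h => e.injective (Subtype.ext h), fun i => ?_⟩
  have := (e i).2
  rw [Multiset.mem_toFinset] at this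
  have h := Polynomial.isRoot_of_mem_roots this
  simp only [p, Polynomial.IsRoot.def, Polynomial.eval_sub, Polynomial.eval_pow,
    Polynomial.eval_X, Polynomial.eval_C, sub_eq_zero] at h
  exact h

theorem vander (d : ℕ) (α : Fin d → K) (hα : Function.Injective α) (μ : ℕ → K) :
    ∃ c : Fin d → K, ∀ i < d, ∑ k, c k * α k ^ i = μ i := by
  have h : IsUnit (Matrix.vandermonde α) := by
    rw [Matrix.isUnit_iff_isUnit_det, isUnit_iff_ne_zero]
    exact Matrix.det_vandermonde_ne_zero_iff.mpr hα
  obtain ⟨c, hc⟩ := Matrix.vecMul_surjective_iff_isUnit.mpr h (fun i => μ i)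
  refine ⟨c, fun i hi => ?_⟩
  have := congrFun hc ⟨i, hi⟩
  simpa [Matrix.vecMul, dotProduct, Matrix.vandermonde_apply] using this

theorem nu_mem (d : ℕ) (x : Fin (m+1) → K) (hx : x ≠ 0) (D : Set (Pm K m))
    (h : Projectivization.mk K x hx ∈ D) : nu d x ∈ dualSpan d D := by
  obtain ⟨a, ha⟩ := Projectivization.exists_smul_eq_mk_rep K x hx
  have : x = ((a⁻¹ : Kˣ) : K) • (Projectivization.mk K x hx).rep := by
    rw [← ha]; exact (inv_smul_smul a x).symm
  rw [this, nu_smul]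
  exact Submodule.smul_mem _ _ (Submodule.subset_span ⟨_, h, rfl⟩)

theorem two_tau [CharZero K] (d : ℕ) (S : Finset (Pm K m)) (c β γ : Pm K m → K)
    (hne : ∃ i ≤ d, ∑ b ∈ S, c b * (β b ^ i * γ b ^ (d - i)) ≠ 0) :
    ∃ τ1 τ2 : K, τ1 ≠ τ2 ∧ ∑ b ∈ S, c b * (β b + τ1 * γ b) ^ d ≠ 0 ∧
      ∑ b ∈ S, c b * (β b + τ2 * γ b) ^ d ≠ 0 := by
  let Q : Polynomial K := ∑ i ∈ Finset.range (d + 1),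
    Polynomial.C ((∑ b ∈ S, c b * (β b ^ i * γ b ^ (d - i))) * (d.choose i : K)) *
      Polynomial.X ^ (d - i)
  have hQev : ∀ τ, Q.eval τ = ∑ b ∈ S, c b * (β b + τ * γ b) ^ d := by
    intro τ
    simp only [Q, Polynomial.eval_finsetSum, Polynomial.eval_mul, Polynomial.eval_C,
      Polynomial.eval_pow, Polynomial.eval_X, add_pow, Finset.mul_sum, Finset.sum_mul]
    rw [Finset.sum_comm]
    refine Finset.sum_congr rfl fun b _ => Finset.sum_congr rfl fun i _ => ?_
    rw [mul_pow]; ring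
  have hQ : Q ≠ 0 := by
    intro h0
    obtain ⟨i, hi, hμ⟩ := hne
    have h1 : Q.coeff (d - i) = (∑ b ∈ S, c b * (β b ^ i * γ b ^ (d - i))) * (d.choose i : K) := by
      simp only [Q, Polynomial.finsetSum_coeff, Polynomial.coeff_C_mul_X_pow]
      rw [Finset.sum_eq_single_of_mem i (Finset.mem_range.mpr (by omega))]
      · simp
      · intro k hk hki
        rw [Finset.mem_range] at hk
        rw [if_neg (by omega)]
    rw [h0, Polynomial.coeff_zero] at h1
    refine mul_ne_zero hμ ?_ h1.symm
    exact_mod_cast (Nat.choose_pos hi).ne'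
  obtain ⟨τ1, h1⟩ := Infinite.exists_notMem_finset Q.roots.toFinset
  obtain ⟨τ2, h2⟩ := Infinite.exists_notMem_finset (insert τ1 Q.roots.toFinset)
  simp only [Finset.mem_insert, not_or, Multiset.mem_toFinset, Polynomial.mem_roots hQ,
    Polynomial.IsRoot.def, hQev] at h1 h2
  exact ⟨τ1, τ2, fun h => h2.1 h.symm, h1, h2.2⟩

theorem binary [IsAlgClosed K] [CharZero K] (d : ℕ) (hd : 1 ≤ d) (p q : Pm K m) (hpq : p ≠ q)
    (S : Finset (Pm K m)) (hS : ∀ b ∈ S, b.rep ∈ ln p q) (c : Pm K m → K) :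
    ∃ D : Finset (Pm K m), D.card ≤ d ∧
      ∑ b ∈ S, c b • nu d b.rep ∈ dualSpan d (D : Set (Pm K m)) := by
  have hS' : ∀ b ∈ S, ∃ β γ : K, β • p.rep + γ • q.rep = b.rep := fun b hb =>
    Submodule.mem_span_pair.mp (hS b hb)
  choose! β γ hβγ using hS'
  by_cases hne : ∃ i ≤ d, ∑ b ∈ S, c b * (β b ^ i * γ b ^ (d - i)) ≠ 0
  swap
  · push Not at hne
    refine ⟨∅, by simp, ?_⟩
    have : ∑ b ∈ S, c b • nu d b.rep = 0 := by
      ext f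
      obtain ⟨a, ha⟩ := hom2 d (f : PR K m) ((mem_homogeneousSubmodule _ _).mp f.2) p.rep q.rep
      simp only [LinearMap.sum_apply, LinearMap.smul_apply, nu_apply, smul_eq_mul,
        LinearMap.zero_apply]
      have h1 : ∀ b ∈ S, c b * eval b.rep (f : PR K m) =
          ∑ i ∈ Finset.range (d + 1), a i * (c b * (β b ^ i * γ b ^ (d - i))) := by
        intro b hb
        rw [← hβγ b hb, ha, Finset.mul_sum]
        exact Finset.sum_congr rfl fun i _ => by ring
      rw [Finset.sum_congr rfl h1, Finset.sum_comm]
      refine Finset.sum_eq_zero fun i hi => ?_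
      rw [← Finset.mul_sum, hne i (by rw [Finset.mem_range] at hi; omega), mul_zero]
    rw [this]; exact Submodule.zero_mem _
  obtain ⟨τ1, τ2, hτ, hM1, hM0⟩ := two_tau d S c β γ hne
  have hδ : τ2 - τ1 ≠ 0 := sub_ne_zero.mpr hτ.symm
  set v : Fin (m+1) → K := (τ2 - τ1)⁻¹ • (τ2 • p.rep - q.rep) with hv
  set w : Fin (m+1) → K := (τ2 - τ1)⁻¹ • (q.rep - τ1 • p.rep) with hw
  set x : Pm K m → K := fun b => β b + τ1 * γ b with hx
  set y : Pm K m → K := fun b => β b + τ2 * γ b with hy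
  have hb : ∀ b ∈ S, b.rep = x b • v + y b • w := by
    intro b hb
    rw [← hβγ b hb]
    funext i
    simp only [hv, hw, hx, hy, Pi.add_apply, Pi.smul_apply, Pi.sub_apply, smul_eq_mul]
    field_simp
    ring
  set M1 := ∑ b ∈ S, c b * x b ^ d with hM1d
  set M0 := ∑ b ∈ S, c b * y b ^ d with hM0d
  obtain ⟨α, hαi, hα⟩ := roots_ex d hd (M1 / M0) (div_ne_zero hM1 hM0)
  obtain ⟨c', hc'⟩ := vander d α hαi (fun i => ∑ b ∈ S, c b * (x b ^ i * y b ^ (d - i)))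
  have hc'' : ∀ i ≤ d, ∑ k, c' k * α k ^ i = ∑ b ∈ S, c b * (x b ^ i * y b ^ (d - i)) := by
    intro i hi
    rcases Nat.lt_or_ge i d with h | h
    · exact hc' i h
    · obtain rfl : i = d := le_antisymm hi h
      have h0 := hc' 0 (by omega)
      simp only [pow_zero, mul_one, one_mul, Nat.sub_zero] at h0
      simp only [hα, ← Finset.sum_mul, h0, Nat.sub_self, pow_zero, mul_one]
      rw [← hM0d, ← hM1d]; field_simp
  have hnz : ∀ k, α k • v + w ≠ 0 := by
    intro k h0
    have hli := Projectivization.linearIndependent_pair_iff_ne.mpr hpq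
    rw [LinearIndependent.pair_iff] at hli
    have h1 := hli (α k * τ2 - τ1) (1 - α k) (by
      have : (α k * τ2 - τ1) • p.rep + (1 - α k) • q.rep = (τ2 - τ1) • (α k • v + w) := by
        funext i
        simp only [hv, hw, Pi.add_apply, Pi.smul_apply, Pi.sub_apply, smul_eq_mul]
        field_simp
        ring
      rw [this, h0, smul_zero])
    have h2 : α k = 1 := (sub_eq_zero.mp h1.2).symm
    rw [h2, one_mul] at h1
    exact hδ h1.1
  refine ⟨Finset.univ.image (fun k => Projectivization.mk K (α k • v + w) (hnz k)),
    Finset.card_image_le.trans (by simp), ?_⟩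
  have hmain : ∑ b ∈ S, c b • nu d b.rep = ∑ k, c' k • nu d (α k • v + w) := by
    ext f
    obtain ⟨a, ha⟩ := hom2 d (f : PR K m) ((mem_homogeneousSubmodule _ _).mp f.2) v w
    simp only [LinearMap.sum_apply, LinearMap.smul_apply, nu_apply, smul_eq_mul]
    have h1 : ∀ b ∈ S, c b * eval b.rep (f : PR K m) =
        ∑ i ∈ Finset.range (d + 1), a i * (c b * (x b ^ i * y b ^ (d - i))) := by
      intro b hb'
      rw [hb b hb', ha, Finset.mul_sum]
      exact Finset.sum_congr rfl fun i _ => by ring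
    have h2 : ∀ k, c' k * eval (α k • v + w) (f : PR K m) =
        ∑ i ∈ Finset.range (d + 1), a i * (c' k * α k ^ i) := by
      intro k
      have := ha (α k) 1
      rw [one_smul] at this
      rw [this, Finset.mul_sum]
      exact Finset.sum_congr rfl fun i _ => by rw [one_pow]; ring
    rw [Finset.sum_congr rfl h1, Finset.sum_congr rfl (fun k _ => h2 k), Finset.sum_comm]
    conv_rhs => rw [Finset.sum_comm]
    refine Finset.sum_congr rfl fun i hi => ?_
    rw [← Finset.mul_sum, ← Finset.mul_sum, hc'' i (by rw [Finset.mem_range] at hi; omega)]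
  rw [hmain]
  refine Submodule.sum_mem _ fun k _ => Submodule.smul_mem _ _ (nu_mem d _ (hnz k) _ ?_)
  simp

theorem span_sum (d : ℕ) (B : Finset (Pm K m)) (φ : Module.Dual K (Hd K m d))
    (h : φ ∈ dualSpan d (B : Set (Pm K m))) : ∃ c : Pm K m → K, φ = ∑ b ∈ B, c b • nu d b.rep := by
  rw [dualSpan, Submodule.mem_span_image_finset_iff_exists_fun] at h
  obtain ⟨c, hc⟩ := h
  refine ⟨fun b => if h : b ∈ B then c ⟨b, h⟩ else 0, ?_⟩
  rw [← hc, ← Finset.sum_coe_sort B]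
  refine Finset.sum_congr rfl fun i _ => ?_
  simp

theorem main [IsAlgClosed K] [CharZero K] (s d : ℕ) (hs : 4 ≤ s) (hd : 2 * s + 2 ≤ d)
    (r : ℕ) (h1 : d + s ≤ r + 1) (h2 : r + s ≤ 2 * d + 1) (P : PN K m d)
    (hb : brank d P = s) (hr : srank d P = r) : False := by
  have hP : P ∈ secantWrt (XSet K m d) s := by
    have hne := Nat.nonempty_of_pos_sInf (s := {s | 0 < s ∧ P ∈ secantWrt (XSet K m d) s}) (by
      have : 0 < brank d P := by omega
      exact this)
    have := (Nat.sInf_mem hne).2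
    have hb' : sInf {s | 0 < s ∧ P ∈ secantWrt (XSet K m d) s} = s := hb
    rwa [hb'] at this
  obtain ⟨B, hBr, hPB⟩ := rank_ex d r (by omega) P hr
  have hBr' : B.card = r := le_antisymm hBr (hr ▸ rank_le d P B hPB)
  obtain ⟨c, hc⟩ := span_sum d B _ hPB
  have hsub : ∀ b ∈ B, c b ≠ 0 := by
    intro b hbB h0
    have := rank_le d P (B.erase b) (by
      rw [hc, ← Finset.add_sum_erase _ _ hbB, h0, zero_smul, zero_add]
      exact Submodule.sum_mem _ fun x hx => Submodule.smul_mem _ _ (Submodule.subset_span ⟨x, hx, rfl⟩))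
    rw [Finset.card_erase_of_mem hbB] at this
    omega
  obtain ⟨p, q, hpq, hcard⟩ := geo2 d s hs hd B c hsub (cat d s P hP B c hc) (by omega) (by omega)
  obtain ⟨D, hD, hDs⟩ := binary d (by omega) p q hpq (B.filter (fun x => x.rep ∈ ln p q))
    (by intro b hb; exact (Finset.mem_filter.mp hb).2) c
  have hfin := rank_le d P (D ∪ B.filter (fun x => x.rep ∉ ln p q)) (by
    rw [hc, ← Finset.sum_filter_add_sum_filter_not B (fun x => x.rep ∈ ln p q)]
    refine Submodule.add_mem _ ?_ ?_
    · refine Submodule.span_mono (Set.image_mono ?_) hDs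
      intro x hx; simp at hx; simp [hx]
    · refine Submodule.sum_mem _ fun x hx => Submodule.smul_mem _ _ (Submodule.subset_span ⟨x, ?_, rfl⟩)
      rw [Finset.mem_coe]
      exact Finset.mem_union_right _ hx)
  have hu := Finset.card_union_le D (B.filter (fun x => x.rep ∉ ln p q))
  have hsplit := Finset.card_filter_add_card_filter_not (s := B) (fun x => x.rep ∈ ln p q)
  omega
end Veq
end

/-- Step (c) of the proof of the main theorem: emptiness of `σ_{s,r}(X_{m,d})` for
`d+s-1 ≤ r ≤ 2d+1-s`. -/
theorem stmt16 (K : Type) [Field K] [IsAlgClosed K] [CharZero K]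
    (m s d : ℕ) (hm : 2 ≤ m) (hs : 4 ≤ s) (hd : 2 * s + 2 ≤ d) :
    ∀ r : ℕ, d + s ≤ r + 1 → r + s ≤ 2 * d + 1 → sigmaSet K m d s r = ∅ := by
  intro r h1 h2
  rw [Set.eq_empty_iff_forall_notMem]
  rintro P ⟨hb, hr⟩
  exact Veq.main s d hs hd r h1 h2 P hb hr
end
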